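/- arXiv:2111.04387 — 3 statements merged into one kernel-verified Lean document; each statement's English description precedes it below -/
import Mathlib

section
/- Let t ≥ 3 be an odd square-free integer, let q be an odd prime and r a positive natural number, and set m = q^r. Then t divides the class number of the imaginary quadratic field ℚ(√(1 − 2m^t)). -/
open Polynomial NumberField

/-- A fixed choice of complex square root of the integer `d`. -/
noncomputable def sqrtC (d : ℤ) : ℂ := (d : ℂ) ^ ((1 : ℂ) / 2)

lemma sqrtC_sq (d : ℤ) : sqrtC d ^ 2 = (d : ℂ) := by
  unfold sqrtC
  rcases eq_or_ne (d : ℂ) 0 with h | h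
  · rw [h, Complex.zero_cpow (by norm_num : (1 : ℂ) / 2 ≠ 0)]
    simp
  · rw [pow_two, ← Complex.cpow_add _ _ h]
    norm_num

lemma isIntegral_sqrtC (d : ℤ) : IsIntegral ℚ (sqrtC d) := by
  refine ⟨X ^ 2 - C (d : ℚ), monic_X_pow_sub_C _ two_ne_zero, ?_⟩
  have : (Polynomial.aeval (sqrtC d)) (X ^ 2 - C (d : ℚ)) = 0 := by
    simp [sqrtC_sq]
  simpa [Polynomial.aeval_def] using this

/-- The (number) field `ℚ(√d)`, realized as a subfield of `ℂ`. -/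
noncomputable def Qsqrt (d : ℤ) : IntermediateField ℚ ℂ :=
  IntermediateField.adjoin ℚ {sqrtC d}

instance (d : ℤ) : FiniteDimensional ℚ (Qsqrt d) :=
  IntermediateField.adjoin.finiteDimensional (isIntegral_sqrtC d)

instance (d : ℤ) : NumberField (Qsqrt d) := ⟨⟩

lemma pow_two_pow_expand {R : Type*} [CommRing R] (a v : R) (s : ℕ) :
    ∃ z, (1 + 4 * a * v) ^ (2 ^ s) = 1 + 2 ^ s * (4 * a * v) + 2 ^ (s + 3) * a ^ 2 * z := by
  induction s with
  | zero => exact ⟨0, by ring⟩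
  | succ s ih =>
    obtain ⟨z, hz⟩ := ih
    refine ⟨z + 2 ^ s * v ^ 2 + 2 ^ s * 4 * a * v * z + 2 ^ s * 4 * a ^ 2 * z ^ 2, ?_⟩
    rw [pow_succ 2 s, pow_mul, hz]
    ring

lemma one_add_pow_expand {R : Type*} [CommRing R] (y : R) (o : ℕ) :
    ∃ z, (1 + y) ^ o = 1 + o * y + y ^ 2 * z := by
  induction o with
  | zero => exact ⟨0, by simp⟩
  | succ o ih =>
    obtain ⟨z, hz⟩ := ih
    refine ⟨o + z + y * z, ?_⟩
    rw [pow_succ, hz]; push_cast; ring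

lemma pow_expand {R : Type*} [CommRing R] (a v : R) (s o : ℕ) :
    ∃ z, (1 + 4 * a * v) ^ (2 ^ s * o)
      = 1 + (2 ^ s * o) * (4 * a * v) + 2 ^ (s + 3) * a ^ 2 * z := by
  obtain ⟨z, hz⟩ := pow_two_pow_expand a v s
  obtain ⟨y, hy⟩ := one_add_pow_expand (2 ^ s * (4 * a * v) + 2 ^ (s + 3) * a ^ 2 * z) o
  refine ⟨o * z + 2 * 2 ^ s * (v + 2 * a * z) ^ 2 * y, ?_⟩
  rw [pow_mul, hz, add_assoc, hy]; ring

lemma sq_one_cases {R : ℤ} (h : R ^ 2 = 1) : R = 1 ∨ R = -1 := by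
  rcases mul_eq_zero.mp (show (R - 1) * (R + 1) = 0 by linarith [h, sq R]) with h | h <;> omega

lemma mod3 (e : ℤ) (he : e = -5) (j : ℕ) : ∃ x y : ℤ, (⟨1, 4⟩ : ℤ√e) ^ (2 * (j + 1)) = ⟨2 + 3 * x, 2 + 3 * y⟩ := by
  subst he
  induction j with
  | zero => exact ⟨-27, 2, by ext <;> simp [pow_two]⟩
  | succ j ih =>
    obtain ⟨x, y, h⟩ := ih
    have : (⟨1, 4⟩ : ℤ√(-5)) ^ (2 * (j + 1 + 1)) = ⟨2 + 3 * x, 2 + 3 * y⟩ * ⟨-79, 8⟩ := by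
      rw [← h, mul_add 2 (j+1) 1, pow_add]; rfl
    refine ⟨-79 * x - 40 * y - 80, 8 * x - 79 * y - 48, ?_⟩
    rw [this]; ext <;> simp <;> ring

/-- the Diophantine core -/
lemma core (a : ℤ) (ha : 1 ≤ a) (h : ℕ) (hh : 1 ≤ h)
    (hP : (((⟨1, 1⟩ : ℤ√(-(1 + 4 * a))) ^ (2 * h + 1)).re) ^ 2 = 4 ^ h) : False := by
  set e : ℤ := -(1 + 4 * a) with he
  set δ : ℤ√e := ⟨1, 1⟩ with hδ
  set γ : ℤ√e := ⟨-2 * a, 1⟩ with hγ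
  set v : ℤ√e := ⟨1 - a, 1⟩ with hv
  have h2 : δ ^ 2 = 2 * γ := by
    ext <;> simp [pow_two, hδ, hγ, he]; ring
  have h4 : δ ^ 4 = ((-4 : ℤ) : ℤ√e) * (1 + 4 * (a : ℤ√e) * v) := by
    have : δ ^ 4 = δ ^ 2 * δ ^ 2 := by ring
    rw [this, h2]
    have e4 : (4 : ℤ√e) = ((4 : ℤ) : ℤ√e) := by norm_cast
    have e2 : (2 : ℤ√e) = ((2 : ℤ) : ℤ√e) := by norm_cast
    rw [e4, e2]
    ext <;> simp [hγ, hv, he] <;> ring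
  rcases Nat.even_or_odd' h with ⟨H, rfl | rfl⟩
  · have hH : H ≠ 0 := by omega
    obtain ⟨s, o, ho, hso⟩ := Nat.exists_eq_two_pow_mul_odd hH
    obtain ⟨z, hz⟩ := pow_expand (a : ℤ√e) v s o
    rw [← hso] at hz
    have h1 : δ ^ (2 * (2 * H) + 1)
        = (((-4) ^ H : ℤ) : ℤ√e) * (δ * (1 + 4 * (a : ℤ√e) * v) ^ H) := by
      rw [pow_succ, ← mul_assoc, show 2 * 2 = 4 from rfl, pow_mul, h4, mul_pow]; push_cast; ring
    have hR : (δ * (1 + 4 * (a : ℤ√e) * v) ^ H).re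
        = 1 + 2 ^ (s+2) * a ^ 2 * (-5 * o + 2 * (δ * z).re) := by
      have : δ * (1 + 4 * (a : ℤ√e) * v) ^ H = δ + ((2 ^ s * o * 4 * a : ℤ) : ℤ√e) * (δ * v)
          + ((2 ^ (s + 3) * a ^ 2 : ℤ) : ℤ√e) * (δ * z) := by
        rw [hz]; push_cast; ring
      have hdv : (δ * v).re = -5 * a := by simp [hδ, hv, he]; ring
      rw [this]
      simp only [Zsqrtd.re_add, Zsqrtd.re_smul, hdv]
      have : δ.re = 1 := rfl
      rw [this]; ring
    rw [h1, Zsqrtd.re_smul, mul_pow, ← pow_mul, mul_comm H 2, pow_mul, pow_mul] at hP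
    have hR1 : (δ * (1 + 4 * (a : ℤ√e) * v) ^ H).re ^ 2 = 1 := by
      have : (4:ℤ) ^ 2 = (-4) ^ 2 := by norm_num
      rw [this] at hP
      exact mul_left_cancel₀ (by positivity : (((-4:ℤ)^2)^H) ≠ 0) (by rw [hP, mul_one])
    rw [hR] at hR1
    obtain ⟨k, rfl⟩ := ho
    have hpos : (2:ℤ) ^ (s+2) * a ^ 2 ≠ 0 := by positivity
    generalize (δ * z).re = Z at hR1
    have hodd : (-5 * ((2 * k + 1 : ℕ) : ℤ) + 2 * Z) ≠ 0 := by push_cast; omega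
    rcases sq_one_cases hR1 with h' | h'
    · exact mul_ne_zero hpos hodd (by linarith)
    · have : (2:ℤ) ^ (s+2) * a ^ 2 * (-5 * ((2 * k + 1 : ℕ) : ℤ) + 2 * Z)
          = 4 * (2 ^ s * a ^ 2 * (-5 * ((2 * k + 1 : ℕ) : ℤ) + 2 * Z)) := by ring
      omega
  · have h1 : δ ^ (2 * (2 * H + 1) + 1)
        = ((2 * (-4) ^ H : ℤ) : ℤ√e) * (δ * γ * (1 + 4 * (a : ℤ√e) * v) ^ H) := by
      rw [show 2 * (2 * H + 1) + 1 = 4 * H + 2 + 1 by ring, pow_succ, pow_add, pow_mul, h4, h2,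
        mul_pow]
      push_cast; ring
    obtain ⟨z, hz⟩ := one_add_pow_expand (4 * (a : ℤ√e) * v) H
    have hR1 : (δ * γ * (1 + 4 * (a : ℤ√e) * v) ^ H).re ^ 2 = 1 := by
      rw [h1, Zsqrtd.re_smul, mul_pow] at hP
      have : (4:ℤ) ^ (2 * H + 1) = (2 * (-4) ^ H) ^ 2 := by
        rw [mul_pow, ← pow_mul, mul_comm H 2, pow_mul, pow_succ, pow_mul]; norm_num; ring
      rw [this] at hP
      exact mul_left_cancel₀ (by positivity : (2 * (-4 : ℤ) ^ H) ^ 2 ≠ 0) (by rw [hP, mul_one])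
    have hexp : δ * γ * (1 + 4 * (a : ℤ√e) * v) ^ H
        = δ * γ + ((4 * a * H : ℤ) : ℤ√e) * (δ * γ * v)
          + ((16 * a ^ 2 : ℤ) : ℤ√e) * (δ * γ * v ^ 2 * z) := by
      rw [hz]; push_cast; ring
    have hdg : (δ * γ).re = -1 - 6 * a := by simp [hδ, hγ, he]; ring
    have hR : (δ * γ * (1 + 4 * (a : ℤ√e) * v) ^ H).re = -1 - 6 * a
        + (4 * a * H) * (δ * γ * v).re + 16 * a ^ 2 * (δ * γ * v ^ 2 * z).re := by
      rw [hexp, Zsqrtd.re_add, Zsqrtd.re_add, Zsqrtd.re_smul, Zsqrtd.re_smul, hdg]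
    have hdgv : (δ * γ * v).re = (-1 - 6 * a) * (1 - a) + (1 - 2 * a) * e := by
      simp [hδ, hγ, hv, he]; ring
    generalize hZ : (δ * γ * v ^ 2 * z).re = Z at hR
    rcases sq_one_cases hR1 with h' | h'
    · rw [hR] at h'
      have h3 : a * (2 * (H * (δ * γ * v).re) + 8 * a * Z - 3) = 1 := by linarith
      have ha1 : a = 1 := by
        rcases Int.eq_one_or_neg_one_of_mul_eq_one h3 with h | h <;> omega
      subst ha1
      rw [hdgv] at h'
      norm_num [he] at h'
      have hev : Even H := by
        rw [Nat.even_iff]; omega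
      obtain ⟨j, hj⟩ := hev
      rw [← two_mul] at hj
      rcases j with _ | j
      · subst hj; simp at h'; omega
      · rw [hj] at hR1
        have e5 : e = -5 := by rw [he]; norm_num
        obtain ⟨x, y, hxy⟩ := mod3 e e5 j
        have h14 : (1 + 4 * ((1 : ℤ) : ℤ√e) * v) = ⟨1, 4⟩ := by
          have e4 : (4 : ℤ√e) = ((4 : ℤ) : ℤ√e) := by norm_cast
          rw [e4]
          ext <;> simp [hv]
        have hR' : (δ * γ * (1 + 4 * ((1 : ℤ) : ℤ√e) * v) ^ (2 * (j + 1))).re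
            = -7 * (2 + 3 * x) + 5 * (2 + 3 * y) := by
          rw [h14, hxy]; simp [hδ, hγ, e5]
        have h'' : (δ * γ * (1 + 4 * ((1 : ℤ) : ℤ√e) * v) ^ (2 * (j + 1))).re = 1 := by
          rw [← hj, hR, hdgv]; norm_num [he]; linarith
        rw [hR'] at h''
        omega
    · rw [hR] at h'
      have h3 : a * (2 * (2 * (H * (δ * γ * v).re) + 8 * (a * Z)) - 6) = 0 := by linarith
      rcases mul_eq_zero.mp h3 with h | h <;> omega

lemma step (n x e : ℤ) (hn : Odd n) (hn3 : 3 ≤ n) (he : x ^ 2 - e = n ^ 2) (he0 : e < 0)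
    (h : ℕ) (hh : 1 ≤ h)
    (hre : ((⟨x, 1⟩ : ℤ√e) ^ (2 * h + 1)).re = 1 - n ^ (2 * h + 1)) : False := by
  have hdvd : ∀ k : ℕ, (x + n) ∣ ((⟨x, 1⟩ : ℤ√e) ^ k).re - x ^ k := by
    intro k
    induction k with
    | zero => simp
    | succ k ih =>
      obtain ⟨c, hc⟩ := ih
      refine ⟨c * x + (x - n) * ((⟨x, 1⟩ : ℤ√e) ^ k).im, ?_⟩
      rw [pow_succ, Zsqrtd.re_mul]
      have he' : e = (x + n) * (x - n) := by linarith
      have hc' : ((⟨x, 1⟩ : ℤ√e) ^ k).re = x ^ k + (x + n) * c := by linarith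
      generalize ((⟨x, 1⟩ : ℤ√e) ^ k).im = I at *
      simp only
      rw [hc', he']; ring
  have h1 : x + n ∣ 1 := by
    have ha := hdvd (2 * h + 1)
    have hb : x + n ∣ x ^ (2 * h + 1) + n ^ (2 * h + 1) :=
      Odd.add_dvd_pow_add_pow _ _ ⟨h, rfl⟩
    have := dvd_add ha hb
    rw [hre] at this
    have h1 : 1 - n ^ (2 * h + 1) - x ^ (2 * h + 1) + (x ^ (2 * h + 1) + n ^ (2 * h + 1)) = 1 := by
      ring
    rwa [h1] at this
  have hx : x + n = 1 := by
    rcases Int.isUnit_iff.mp (isUnit_of_dvd_one h1) with h | h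
    · exact h
    · exfalso; nlinarith
  obtain ⟨a, ha⟩ := hn
  have he2 : e = -(1 + 4 * a) := by
    have : x = -2 * a := by linarith
    subst this; subst ha; linarith
  have hx2 : x = - 2 * a := by linarith
  subst he2
  apply core a (by omega) h hh
  set δ : ℤ√(-(1 + 4 * a)) := ⟨1, 1⟩ with hδ
  have h2 : δ ^ 2 = ((2 : ℤ) : ℤ√(-(1 + 4 * a))) * ⟨x, 1⟩ := by
    ext <;> simp [pow_two, hδ, hx2]; ring
  have hs : (δ ^ (2 * h + 1)) ^ 2
      = ((2 ^ (2 * h + 1) : ℤ) : ℤ√(-(1 + 4 * a))) * ⟨x, 1⟩ ^ (2 * h + 1) := by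
    rw [← pow_mul, mul_comm (2 * h + 1) 2, pow_mul, h2, mul_pow]; push_cast; rfl
  have hs2 := congrArg Zsqrtd.re hs
  rw [Zsqrtd.re_smul, hre, pow_two, Zsqrtd.re_mul] at hs2
  have hN : (δ ^ (2 * h + 1)).norm = (2 * n) ^ (2 * h + 1) := by
    have : (δ ^ (2 * h + 1)).norm = δ.norm ^ (2 * h + 1) :=
      map_pow (Zsqrtd.normMonoidHom) δ _
    rw [this]; congr 1
    simp [Zsqrtd.norm, hδ]; linarith
  rw [Zsqrtd.norm_def, mul_pow] at hN
  have h4 : (2 : ℤ) ^ (2 * h + 1) = 2 * 4 ^ h := by rw [pow_succ, pow_mul]; norm_num; ring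
  rw [h4] at hN hs2
  linarith

lemma sqrtC_re (d : ℤ) (hd : d < 0) : (sqrtC d).re = 0 ∧ (sqrtC d).im ≠ 0 := by
  have h := sqrtC_sq d
  have hd' : (d : ℝ) < 0 := by exact_mod_cast hd
  have hr := congrArg Complex.re h
  have hi := congrArg Complex.im h
  simp [pow_two] at hr hi
  have him : (sqrtC d).im ≠ 0 := by
    intro h0; rw [h0] at hr; nlinarith [mul_self_nonneg (sqrtC d).re]
  refine ⟨?_, him⟩
  have : (sqrtC d).re * (sqrtC d).im = 0 := by linarith
  rcases mul_eq_zero.mp this with h | h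
  · exact h
  · exact absurd h him

lemma conj_sqrtC (d : ℤ) (hd : d < 0) : (starRingEnd ℂ) (sqrtC d) = - sqrtC d := by
  apply Complex.ext <;> simp [(sqrtC_re d hd).1]

lemma mem_Qsqrt (d : ℤ) (hd : d < 0) (z : ℂ) (hz : z ∈ Qsqrt d) :
    ∃ a b : ℚ, z = a + b * sqrtC d := by
  have hs := sqrtC_sq d
  unfold Qsqrt at hz
  induction hz using IntermediateField.adjoin_induction with
  | mem x hx => exact ⟨0, 1, by simpa using hx⟩
  | algebraMap x => exact ⟨x, 0, by simp⟩
  | add x y _ _ hx hy =>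
    obtain ⟨a, b, rfl⟩ := hx
    obtain ⟨a', b', rfl⟩ := hy
    exact ⟨a + a', b + b', by push_cast; ring⟩
  | mul x y _ _ hx hy =>
    obtain ⟨a, b, rfl⟩ := hx
    obtain ⟨a', b', rfl⟩ := hy
    exact ⟨a * a' + b * b' * d, a * b' + b * a', by
      push_cast; linear_combination (b * b' : ℂ) * hs⟩
  | inv x _ hx =>
    obtain ⟨a, b, rfl⟩ := hx
    by_cases h0 : a ^ 2 - b ^ 2 * d = 0
    · have hd' : (d : ℚ) < 0 := by exact_mod_cast hd
      have hb : b = 0 := by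
        by_contra hb
        have : 0 < b ^ 2 := by positivity
        nlinarith [sq_nonneg a]
      have ha : a = 0 := by rw [hb] at h0; simpa using h0
      exact ⟨0, 0, by simp [ha, hb]⟩
    · refine ⟨a / (a ^ 2 - b ^ 2 * d), - b / (a ^ 2 - b ^ 2 * d), ?_⟩
      have h0' : ((a : ℂ) ^ 2 - b ^ 2 * d) ≠ 0 := by exact_mod_cast h0
      apply inv_eq_of_mul_eq_one_right
      push_cast
      field_simp
      linear_combination (-b ^ 2 : ℂ) * hs

lemma rat_int (r : ℚ) (h : IsIntegral ℤ (r : ℂ)) : ∃ k : ℤ, r = k := by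
  have h' : IsIntegral ℤ r := by
    have : (r : ℂ) = algebraMap ℚ ℂ r := by simp
    rw [this] at h
    exact (isIntegral_algebraMap_iff (algebraMap ℚ ℂ).injective).mp h
  obtain ⟨k, hk⟩ := IsIntegrallyClosed.isIntegral_iff.mp h'
  exact ⟨k, by simpa using hk.symm⟩

lemma conj_integral (z : ℂ) (h : IsIntegral ℤ z) : IsIntegral ℤ ((starRingEnd ℂ) z) :=
  h.map ((starRingEnd ℂ).toIntAlgHom)

lemma param (d : ℤ) (hd : d < 0) (hd4 : d % 4 = 3) (z : ℂ) (hz : z ∈ Qsqrt d)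
    (hi : IsIntegral ℤ z) : ∃ (x e : ℤ) (c : ℚ), z = x + c * sqrtC d ∧
      (c * sqrtC d) ^ 2 = (e : ℂ) ∧ e = c ^ 2 * d ∧ Complex.normSq z = x ^ 2 - e := by
  obtain ⟨a, b, hab⟩ := mem_Qsqrt d hd z hz
  have hs := sqrtC_sq d
  have hc : (starRingEnd ℂ) z = a - b * sqrtC d := by
    rw [hab]; simp [conj_sqrtC d hd]; ring
  obtain ⟨A, hA⟩ := rat_int (2 * a) (by
    have := hi.add (conj_integral z hi)
    rw [hc, hab] at this
    have h1 : ((2 * a : ℚ) : ℂ) = a + b * sqrtC d + (a - b * sqrtC d) := by push_cast; ring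
    rw [h1]; exact this)
  obtain ⟨N, hN⟩ := rat_int (a ^ 2 - b ^ 2 * d) (by
    have := hi.mul (conj_integral z hi)
    rw [hc, hab] at this
    have h1 : ((a ^ 2 - b ^ 2 * d : ℚ) : ℂ) = (a + b * sqrtC d) * (a - b * sqrtC d) := by
      push_cast; linear_combination (b ^ 2 : ℂ) * hs
    rw [h1]; exact this)
  have hev : Even A := by
    by_contra hodd
    rw [Int.not_even_iff_odd] at hodd
    have hsq : IsSquare (((A ^ 2 - 4 * N) * d : ℤ) : ℚ) :=
      ⟨2 * b * d, by push_cast; rw [← hA, ← hN]; ring⟩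
    rw [Rat.isSquare_intCast_iff] at hsq
    obtain ⟨f, hf⟩ := hsq
    obtain ⟨k, rfl⟩ := hodd
    have h3 : ((2 * k + 1) ^ 2 - 4 * N) * d % 4 = 3 := by
      have : ((2 * k + 1) ^ 2 - 4 * N) % 4 = 1 := by
        have : ((2 * k + 1) ^ 2 - 4 * N) = 4 * (k ^ 2 + k - N) + 1 := by ring
        omega
      rw [Int.mul_emod, this, hd4]; rfl
    rw [hf, Int.mul_emod] at h3
    have : f % 4 = 0 ∨ f % 4 = 1 ∨ f % 4 = 2 ∨ f % 4 = 3 := by omega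
    rcases this with h | h | h | h <;> rw [h] at h3 <;> norm_num at h3
  obtain ⟨x, hx⟩ := hev
  have hax : a = x := by
    have : (A : ℚ) = x + x := by exact_mod_cast hx
    linarith
  have hb : ((x ^ 2 - N : ℤ) : ℚ) = b ^ 2 * d := by
    push_cast; rw [← hN, ← hax]; ring
  refine ⟨x, x ^ 2 - N, b, ?_, ?_, hb, ?_⟩
  · rw [hab, hax]; simp
  · rw [mul_pow, hs]; exact_mod_cast hb.symm
  · have : (Complex.normSq z : ℂ) = N := by
      rw [← Complex.mul_conj, hc, hab]
      have : ((N : ℚ) : ℂ) = N := by simp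
      rw [← this, ← hN]; push_cast; linear_combination (-b ^ 2 : ℂ) * hs
    have h2 : Complex.normSq z = N := by exact_mod_cast this
    rw [h2]; push_cast; ring

lemma unit_pow_four (d : ℤ) (hd : d < 0) (hd4 : d % 4 = 3) (u : (𝓞 (Qsqrt d))ˣ) :
    (u : 𝓞 (Qsqrt d)) ^ 4 = 1 := by
  have key : ∀ w : 𝓞 (Qsqrt d), ∃ (x e : ℤ) (c : ℚ), ((w : Qsqrt d) : ℂ) = x + c * sqrtC d ∧
      (c * sqrtC d) ^ 2 = (e : ℂ) ∧ e = c ^ 2 * d ∧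
      Complex.normSq ((w : Qsqrt d) : ℂ) = x ^ 2 - e := fun w =>
    param d hd hd4 _ (w : Qsqrt d).2 (w.2.map (Qsqrt d).val.toRingHom.toIntAlgHom)
  have hdQ : (d : ℚ) < 0 := by exact_mod_cast hd
  have hdR : (d : ℚ) ≤ 0 := hdQ.le
  obtain ⟨x, e, c, h1, h2, h3, h4⟩ := key u
  obtain ⟨x', e', c', h1', h2', h3', h4'⟩ := key (u⁻¹ : (𝓞 (Qsqrt d))ˣ)
  have he : e ≤ 0 := by
    have : (e : ℚ) ≤ 0 := by rw [h3]; exact mul_nonpos_of_nonneg_of_nonpos (sq_nonneg c) hdR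
    exact_mod_cast this
  have he' : e' ≤ 0 := by
    have : (e' : ℚ) ≤ 0 := by rw [h3']; exact mul_nonpos_of_nonneg_of_nonpos (sq_nonneg c') hdR
    exact_mod_cast this
  have hmul : (((u : 𝓞 (Qsqrt d)) : Qsqrt d) : ℂ) *
      ((((u⁻¹ : (𝓞 (Qsqrt d))ˣ) : 𝓞 (Qsqrt d)) : Qsqrt d) : ℂ) = 1 := by
    have := u.mul_inv
    exact_mod_cast congrArg (fun w : 𝓞 (Qsqrt d) => ((w : Qsqrt d) : ℂ)) this
  have hN := congrArg Complex.normSq hmul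
  rw [map_mul, h4, h4', map_one] at hN
  have hN' : (x ^ 2 - e) * (x' ^ 2 - e') = 1 := by exact_mod_cast hN
  have hx1 : x ^ 2 - e = 1 := by
    rcases Int.eq_one_or_neg_one_of_mul_eq_one hN' with h | h
    · exact h
    · nlinarith [sq_nonneg x]
  have hfin : (((u : 𝓞 (Qsqrt d)) : Qsqrt d) : ℂ) ^ 4 = 1 := by
    rw [h1]
    have hx : x = 0 ∨ x ^ 2 = 1 := by
      rcases eq_or_ne x 0 with h | h
      · exact Or.inl h
      · right
        have : 0 < x ^ 2 := by positivity
        omega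
    rcases hx with hx | hx
    · have : e = -1 := by rw [hx] at hx1; omega
      rw [hx, Int.cast_zero, zero_add, show 4 = 2 * 2 from rfl, pow_mul, h2, this]; norm_num
    · have : e = 0 := by omega
      rw [this] at h2
      have h0 : (c * sqrtC d : ℂ) = 0 := by simpa using h2
      rw [h0, add_zero, show 4 = 2 * 2 from rfl, pow_mul]
      have : (x : ℂ) ^ 2 = 1 := by exact_mod_cast hx
      rw [this]; norm_num
  have h5 : ((u : 𝓞 (Qsqrt d)) : Qsqrt d) ^ 4 = 1 := by
    apply Subtype.ext; simpa using hfin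
  exact_mod_cast h5

/-- `β = (1 - m^t) + √(1 - 2 m^t)` is not a `p`-th power for odd `p ≥ 3`. -/
lemma not_pow (d n : ℤ) (hn : Odd n) (hn3 : 3 ≤ n) (h : ℕ) (hh : 1 ≤ h)
    (hdn : d = 1 - 2 * n ^ (2 * h + 1)) (hd : d < 0) (hd4 : d % 4 = 3)
    (g : ℂ) (hg : g ∈ Qsqrt d) (hgi : IsIntegral ℤ g)
    (hpow : g ^ (2 * h + 1) = ((1 - n ^ (2 * h + 1) : ℤ) : ℂ) + sqrtC d) : False := by
  obtain ⟨x, e, c, h1, h2, h3, h4⟩ := param d hd hd4 g hg hgi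
  obtain ⟨hre, him⟩ := sqrtC_re d hd
  have hdQ : (d : ℚ) < 0 := by exact_mod_cast hd
  have hs := sqrtC_sq d
  have hNb : Complex.normSq (((1 - n ^ (2 * h + 1) : ℤ) : ℂ) + sqrtC d) = (n ^ 2) ^ (2 * h + 1) := by
    have : (Complex.normSq (((1 - n ^ (2 * h + 1) : ℤ) : ℂ) + sqrtC d) : ℂ)
        = ((n : ℂ) ^ 2) ^ (2 * h + 1) := by
      rw [← Complex.mul_conj, map_add, conj_sqrtC d hd, map_intCast]
      have : (d : ℂ) = 1 - 2 * n ^ (2 * h + 1) := by rw [hdn]; push_cast; ring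
      push_cast
      rw [this] at hs
      rw [← pow_mul, mul_comm 2 (2 * h + 1), pow_mul]
      linear_combination -hs
    exact_mod_cast this
  have hN := congrArg Complex.normSq hpow
  rw [map_pow, h4, hNb] at hN
  have hN' : (x ^ 2 - e) ^ (2 * h + 1) = (n ^ 2) ^ (2 * h + 1) := by exact_mod_cast hN
  have hxe : x ^ 2 - e = n ^ 2 := (Odd.strictMono_pow ⟨h, rfl⟩).injective hN'
  have he0 : e < 0 := by
    have : c ≠ 0 := by
      rintro rfl
      rw [h1] at hpow
      have := congrArg Complex.im hpow
      have hxp : ((x : ℂ) + ((0 : ℚ) : ℂ) * sqrtC d) ^ (2 * h + 1)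
        = ((x ^ (2 * h + 1) : ℤ) : ℂ) := by push_cast; ring
      rw [hxp, Complex.add_im, Complex.intCast_im, Complex.intCast_im, zero_add] at this
      exact him this.symm
    have : (e : ℚ) < 0 := by rw [h3]; exact mul_neg_of_pos_of_neg (by positivity) hdQ
    exact_mod_cast this
  refine step n x e hn hn3 hxe he0 h hh ?_
  let φ : ℤ√e →+* ℂ := Zsqrtd.lift ⟨c * sqrtC d, by rw [← h2, pow_two]⟩
  have hφ : ∀ w : ℤ√e, φ w = w.re + w.im * (c * sqrtC d) := fun w => by
    simp [φ, Zsqrtd.lift]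
  have hφg : φ ⟨x, 1⟩ = g := by rw [hφ, h1]; simp
  have hfin : φ ((⟨x, 1⟩ : ℤ√e) ^ (2 * h + 1)) = ((1 - n ^ (2 * h + 1) : ℤ) : ℂ) + sqrtC d := by
    rw [map_pow, hφg, hpow]
  rw [hφ] at hfin
  have := congrArg Complex.re hfin
  have hcr : ∀ k : ℤ, ((k : ℂ) * (c * sqrtC d)).re = 0 := fun k => by
    have : ((k : ℂ) * (c * sqrtC d)) = (((k : ℝ) * (c : ℝ) : ℝ) : ℂ) * sqrtC d := by
      push_cast; ring
    rw [this, Complex.re_ofReal_mul, hre, mul_zero]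
  rw [Complex.add_re, hcr, Complex.add_re, hre, Complex.intCast_re, Complex.intCast_re] at this
  have h6 : (((⟨x, 1⟩ : ℤ√e) ^ (2 * h + 1)).re : ℝ) = ((1 - n ^ (2 * h + 1) : ℤ) : ℝ) := by
    linarith
  exact_mod_cast h6

theorem t_dvd_classNumber_of_odd_prime_power
    (t : ℕ) (ht3 : 3 ≤ t) (htodd : Odd t) (htsf : Squarefree t)
    (q : ℕ) (hq : q.Prime) (hqodd : Odd q) (r : ℕ) (hr : 0 < r)
    (m : ℕ) (hm : m = q ^ r) :
    t ∣ NumberField.classNumber (Qsqrt (1 - 2 * (m : ℤ) ^ t)) := by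
  have hmodd : Odd m := by rw [hm]; exact hqodd.pow
  have hm3 : 3 ≤ m := by
    have : 1 < m := by rw [hm]; exact Nat.one_lt_pow hr.ne' hq.one_lt
    obtain ⟨k, hk⟩ := hmodd
    omega
  have hModdt : Odd ((m : ℤ) ^ t) := by
    have : Odd (m : ℤ) := by exact_mod_cast hmodd
    exact this.pow
  have hMt : (1 : ℤ) ≤ (m : ℤ) ^ t := one_le_pow₀ (by omega)
  generalize hD : 1 - 2 * (m : ℤ) ^ t = d
  have hd : d < 0 := by omega
  have hd4 : d % 4 = 3 := by obtain ⟨k, hk⟩ := hModdt; omega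
  have hs := sqrtC_sq d
  -- the elements
  let σ : Qsqrt d := ⟨sqrtC d, IntermediateField.mem_adjoin_simple_self ℚ _⟩
  have hσ2 : σ ^ 2 = (d : Qsqrt d) := by apply Subtype.ext; simpa [σ] using hs
  have hσi : IsIntegral ℤ σ := by
    apply IsIntegral.of_pow (n := 2) two_pos
    rw [hσ2]; exact isIntegral_algebraMap (R := ℤ) (x := d)
  let σO : 𝓞 (Qsqrt d) := ⟨σ, hσi⟩
  have hσOc : algebraMap (𝓞 (Qsqrt d)) (Qsqrt d) σO = σ := rfl
  have hσO : σO ^ 2 = (d : 𝓞 (Qsqrt d)) := by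
    apply RingOfIntegers.ext
    change algebraMap (𝓞 (Qsqrt d)) (Qsqrt d) (σO ^ 2) = algebraMap (𝓞 (Qsqrt d)) (Qsqrt d) d
    rw [map_pow, map_intCast, hσOc, hσ2]
  set M : 𝓞 (Qsqrt d) := (m : 𝓞 (Qsqrt d)) with hM
  have hdO : (d : 𝓞 (Qsqrt d)) = 1 - 2 * M ^ t := by
    have := congrArg (Int.cast : ℤ → 𝓞 (Qsqrt d)) hD
    push_cast at this
    exact this.symm
  set β : 𝓞 (Qsqrt d) := 1 - M ^ t + σO with hβ
  set β' : 𝓞 (Qsqrt d) := 1 - M ^ t - σO with hβ'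
  have hprod : β * β' = (M ^ 2) ^ t := by
    rw [hdO] at hσO
    rw [hβ, hβ', ← pow_mul, mul_comm 2 t, pow_mul]
    linear_combination -hσO
  have hcopZ : IsCoprime (((m : ℤ) ^ 2) ^ t) (2 * (1 - (m : ℤ) ^ t)) := by
    have hm2 : IsCoprime (m : ℤ) 2 := by
      obtain ⟨k, hk⟩ := hmodd
      exact ⟨1, -k, by rw [hk]; push_cast; ring⟩
    have hm1 : IsCoprime (m : ℤ) (1 - (m : ℤ) ^ t) := by
      refine ⟨(m : ℤ) ^ (t - 1), 1, ?_⟩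
      rw [← pow_succ, Nat.sub_add_cancel (by omega)]; ring
    exact ((hm2.mul_right hm1).pow_left).pow_left
  have hcop : IsCoprime β β' := by
    obtain ⟨a, b, hab⟩ := hcopZ
    have hab' : (a : 𝓞 (Qsqrt d)) * (M ^ 2) ^ t + b * (2 * (1 - M ^ t)) = 1 := by
      have := congrArg (Int.cast : ℤ → 𝓞 (Qsqrt d)) hab
      push_cast at this
      exact this
    refine ⟨a * β' + b, b, ?_⟩
    rw [← hprod] at hab'
    rw [← hab', hβ, hβ']; ring
  have hβ0 : β ≠ 0 := by
    intro h0
    rw [h0, zero_mul] at hprod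
    have : M ≠ 0 := by rw [hM]; exact_mod_cast (by omega : m ≠ 0)
    exact pow_ne_zero _ (pow_ne_zero _ this) hprod.symm
  obtain ⟨I, hI⟩ : ∃ I : Ideal (𝓞 (Qsqrt d)), Ideal.span {β} = I ^ t := by
    apply exists_eq_pow_of_mul_eq_pow_of_coprime (b := Ideal.span {β'})
      (c := Ideal.span {M ^ 2})
    · exact (Ideal.isCoprime_span_singleton_iff _ _).mpr hcop
    · rw [Ideal.span_singleton_mul_span_singleton, hprod, Ideal.span_singleton_pow]
  have hI0 : I ≠ 0 := by
    rintro rfl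
    rw [zero_pow (by omega)] at hI
    exact hβ0 (by simpa using hI)
  have hImem : I ∈ nonZeroDivisors (Ideal (𝓞 (Qsqrt d))) := mem_nonZeroDivisors_of_ne_zero hI0
  set C := ClassGroup.mk0 (⟨I, hImem⟩ : nonZeroDivisors (Ideal (𝓞 (Qsqrt d)))) with hC
  have hpowC : ∀ k, C ^ k = 1 ↔ (I ^ k).IsPrincipal := fun k => by
    rw [hC, ← map_pow, ClassGroup.mk0_eq_one_iff]
    rfl
  have hCt : C ^ t = 1 := by
    rw [hpowC, ← hI]; exact ⟨β, rfl⟩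
  have hord : orderOf C ∣ t := orderOf_dvd_of_pow_eq_one hCt
  have hcard : orderOf C ∣ NumberField.classNumber (Qsqrt d) := by
    rw [NumberField.classNumber]; exact orderOf_dvd_card
  suffices h : orderOf C = t by rwa [h] at hcard
  obtain ⟨p, hp⟩ := hord
  obtain ⟨g, hg⟩ := (hpowC _).mp (pow_orderOf_eq_one C)
  set k := orderOf C with hk
  have hkpos : k ≠ 0 := by rintro h0; rw [h0] at hp; omega
  have hpodd : Odd p := by rw [hp] at htodd; exact (Nat.odd_mul.mp htodd).2
  obtain ⟨h, rfl⟩ := hpodd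
  rcases Nat.eq_zero_or_pos h with rfl | hh
  · omega
  exfalso
  have hass : Associated (g ^ (2 * h + 1)) β := by
    rw [← Ideal.span_singleton_eq_span_singleton, hI, hp, pow_mul, hg,
      ← Ideal.span_singleton_pow]
  obtain ⟨u, hu⟩ := hass
  have hu4 := unit_pow_four d hd hd4 u
  have hu' : (u : 𝓞 (Qsqrt d)) = (u : 𝓞 (Qsqrt d)) ^ ((2 * h + 1) * (2 * h + 1)) := by
    rw [show (2 * h + 1) * (2 * h + 1) = 4 * (h * h + h) + 1 by ring, pow_succ, pow_mul, hu4,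
      one_pow, one_mul]
  have hroot : (g * u ^ (2 * h + 1)) ^ (2 * h + 1) = β := by
    rw [mul_pow, ← pow_mul, ← hu', hu]
  set G := g * (u : 𝓞 (Qsqrt d)) ^ (2 * h + 1) with hG
  have hnpow : ((m : ℤ) ^ k) ^ (2 * h + 1) = (m : ℤ) ^ t := by rw [← pow_mul, ← hp]
  refine not_pow d ((m : ℤ) ^ k) ?_ ?_ h hh ?_ hd hd4 ((G : Qsqrt d) : ℂ) (G : Qsqrt d).2
    (G.2.map (Qsqrt d).val.toRingHom.toIntAlgHom) ?_
  · have : Odd (m : ℤ) := by exact_mod_cast hmodd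
    exact this.pow
  · calc (3 : ℤ) ≤ (m : ℤ) := by exact_mod_cast hm3
      _ ≤ (m : ℤ) ^ k := le_self_pow₀ (by omega) hkpos
  · rw [hnpow, hD]
  · rw [hnpow]
    have h7 := congrArg (fun w : 𝓞 (Qsqrt d) => ((w : Qsqrt d) : ℂ)) hroot
    have h8 : algebraMap (𝓞 (Qsqrt d)) (Qsqrt d) β = 1 - (m : Qsqrt d) ^ t + σ := by
      rw [hβ, hM, map_add, map_sub, map_pow, map_natCast, map_one, hσOc]
    change ((algebraMap (𝓞 (Qsqrt d)) (Qsqrt d) (G ^ (2 * h + 1)) : Qsqrt d) : ℂ)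
      = ((algebraMap (𝓞 (Qsqrt d)) (Qsqrt d) β : Qsqrt d) : ℂ) at h7
    rw [h8, map_pow] at h7
    change ((algebraMap (𝓞 (Qsqrt d)) (Qsqrt d) G : Qsqrt d) : ℂ) ^ (2 * h + 1) = _
    simpa [σ] using h7
end

section
/- For every odd square-free integer t ≥ 3 there exist infinitely many integers d such that t divides the class number of ℚ(√d) and t divides the class number of ℚ(√(d+1)). Concretely, one may take d = 4(1 − 2m^t)^t with m = q^r for odd primes q and positive integers r. -/
open Polynomial NumberField

open ComplexConjugate

lemma mem_Qsqrt_iff_exists (d : ℤ) (z : ℂ) (hz : z ∈ Qsqrt d) :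
    ∃ x y : ℚ, z = x + y * sqrtC d := by
  have h : z ∈ Algebra.adjoin ℚ {sqrtC d} := by
    rw [← IntermediateField.adjoin_simple_toSubalgebra_of_isAlgebraic (isIntegral_sqrtC d).isAlgebraic]
    exact hz
  have hs := sqrtC_sq d
  induction h using Algebra.adjoin_induction with
  | mem x hx =>
    refine ⟨0, 1, ?_⟩
    simpa using hx
  | algebraMap r => exact ⟨r, 0, by simp⟩
  | add a b ha hb iha ihb =>
    obtain ⟨x, y, h1⟩ := iha (by
      have := IntermediateField.algebra_adjoin_le_adjoin ℚ {sqrtC d} ha; exact this)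
    obtain ⟨x', y', h2⟩ := ihb (by
      have := IntermediateField.algebra_adjoin_le_adjoin ℚ {sqrtC d} hb; exact this)
    refine ⟨x + x', y + y', ?_⟩
    rw [h1, h2]; push_cast; ring
  | mul a b ha hb iha ihb =>
    obtain ⟨x, y, h1⟩ := iha (by
      have := IntermediateField.algebra_adjoin_le_adjoin ℚ {sqrtC d} ha; exact this)
    obtain ⟨x', y', h2⟩ := ihb (by
      have := IntermediateField.algebra_adjoin_le_adjoin ℚ {sqrtC d} hb; exact this)
    refine ⟨x * x' + y * y' * d, x * y' + y * x', ?_⟩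
    rw [h1, h2]; push_cast
    linear_combination (y * y' : ℂ) * hs

/-- A square root of a negative integer is purely imaginary. -/
lemma conj_of_sq_neg (E : ℤ) (hE : E < 0) (e : ℂ) (he : e ^ 2 = (E : ℂ)) : conj e = -e := by
  have h2 : (conj e) ^ 2 = e ^ 2 := by
    rw [← map_pow, he]; simp
  rcases sq_eq_sq_iff_eq_or_eq_neg.mp h2 with h | h
  · exfalso
    obtain ⟨r, hr⟩ := Complex.conj_eq_iff_real.mp h
    rw [hr] at he
    have : r ^ 2 = (E : ℝ) := by exact_mod_cast he
    have h3 : (E : ℝ) < 0 := by exact_mod_cast hE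
    nlinarith [sq_nonneg r]
  · exact h

lemma sqrtC_mem (d : ℤ) : sqrtC d ∈ Qsqrt d :=
  IntermediateField.mem_adjoin_simple_self ℚ (sqrtC d)

lemma ratCast_mem_Qsqrt (d : ℤ) (x : ℚ) : (x : ℂ) ∈ Qsqrt d := by
  have := (Qsqrt d).algebraMap_mem x
  simpa using this

lemma conj_mem_Qsqrt (d : ℤ) (hd : d < 0) (z : ℂ) (hz : z ∈ Qsqrt d) : conj z ∈ Qsqrt d := by
  obtain ⟨x, y, rfl⟩ := mem_Qsqrt_iff_exists d z hz
  have hc := conj_of_sq_neg d hd _ (sqrtC_sq d)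
  simp only [map_add, map_mul, hc, map_ratCast]
  exact add_mem (ratCast_mem_Qsqrt d x)
    (mul_mem (ratCast_mem_Qsqrt d y) (neg_mem (sqrtC_mem d)))

lemma int_of_rat_integral (x : ℚ) (h : IsIntegral ℤ (x : ℂ)) : ∃ n : ℤ, (x : ℂ) = n := by
  have h' : IsIntegral ℤ (algebraMap ℚ ℂ x) := by simpa using h
  have h2 : IsIntegral ℤ x :=
    (isIntegral_algebraMap_iff (algebraMap ℚ ℂ).injective).mp h'
  obtain ⟨n, hn⟩ := IsIntegrallyClosed.isIntegral_iff.mp h2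
  refine ⟨n, ?_⟩
  rw [← hn]; simp

lemma conj_integral_s2 (z : ℂ) (hz : IsIntegral ℤ z) : IsIntegral ℤ (conj z) :=
  hz.map (Complex.conjAe.toAlgHom.restrictScalars ℤ)

lemma trace_norm (d : ℤ) (hd : d < 0) (z : ℂ) (hz : z ∈ Qsqrt d) (hi : IsIntegral ℤ z) :
    ∃ T N : ℤ, z + conj z = T ∧ z * conj z = N ∧ 0 ≤ N ∧ T ^ 2 ≤ 4 * N := by
  have hci := conj_integral_s2 z hi
  obtain ⟨x, y, hxy⟩ := mem_Qsqrt_iff_exists d z hz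
  have hc := conj_of_sq_neg d hd _ (sqrtC_sq d)
  have hcz : conj z = x - y * sqrtC d := by
    rw [hxy]; simp only [map_add, map_mul, hc, map_ratCast]; ring
  have e1 : z + conj z = ((2 * x : ℚ) : ℂ) := by
    rw [hcz, hxy]; push_cast; ring
  have e2 : z * conj z = ((x ^ 2 - d * y ^ 2 : ℚ) : ℂ) := by
    rw [hcz, hxy]; push_cast; linear_combination (-(y : ℂ) ^ 2) * sqrtC_sq d
  obtain ⟨T, hT⟩ := int_of_rat_integral _ (e1 ▸ hi.add hci)
  obtain ⟨N, hN⟩ := int_of_rat_integral _ (e2 ▸ hi.mul hci)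
  refine ⟨T, N, e1.trans hT, e2.trans hN, ?_, ?_⟩
  · have h1 : x ^ 2 - d * y ^ 2 = (N : ℚ) := by exact_mod_cast hN
    have hd' : (d : ℚ) < 0 := by exact_mod_cast hd
    have : (0 : ℚ) ≤ N := by rw [← h1]; nlinarith [sq_nonneg x, sq_nonneg y]
    exact_mod_cast this
  · have h1 : x ^ 2 - d * y ^ 2 = (N : ℚ) := by exact_mod_cast hN
    have h2 : 2 * x = (T : ℚ) := by exact_mod_cast hT
    have hd' : (d : ℚ) < 0 := by exact_mod_cast hd
    have : (T : ℚ) ^ 2 ≤ 4 * N := by rw [← h1, ← h2]; nlinarith [sq_nonneg x, sq_nonneg y]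
    exact_mod_cast this

/-- `√-3` is not in `ℚ(√d)` when `3 ∤ d`. -/
lemma no_sqrt_neg_three (d : ℤ) (h3 : ¬ (3 : ℤ) ∣ d) (z : ℂ) (hz : z ∈ Qsqrt d)
    (h : z ^ 2 = -3) (hd : d < 0) : False := by
  obtain ⟨x, y, hxy⟩ := mem_Qsqrt_iff_exists d z hz
  have hc := conj_of_sq_neg d hd _ (sqrtC_sq d)
  have hcz : conj z = x - y * sqrtC d := by
    rw [hxy]; simp only [map_add, map_mul, hc, map_ratCast]; ring
  have hc2 : conj z = -z := conj_of_sq_neg (-3) (by norm_num) z (by rw [h]; norm_num)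
  have hx : (x : ℂ) = 0 := by
    have := hcz.symm.trans hc2
    rw [hxy] at this
    linear_combination this / 2
  rw [hxy, hx, zero_add, mul_pow, sqrtC_sq] at h
  have h' : y ^ 2 * d = -3 := by exact_mod_cast h
  have hden : (y.den : ℚ) ≠ 0 := by exact_mod_cast y.den_nz
  have h4 : (y.num : ℚ) ^ 2 * d = -3 * (y.den : ℚ) ^ 2 := by
    rw [← h']; nth_rewrite 2 [← Rat.num_div_den y]; field_simp
  have h5 : y.num ^ 2 * d = -3 * (y.den : ℤ) ^ 2 := by exact_mod_cast h4
  have p3 : Prime (3 : ℤ) := Int.prime_three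
  have h6 : (3 : ℤ) ∣ y.num := by
    have : (3 : ℤ) ∣ y.num ^ 2 * d := ⟨-(y.den : ℤ) ^ 2, by rw [h5]; ring⟩
    exact p3.dvd_of_dvd_pow ((p3.dvd_or_dvd this).resolve_right h3)
  obtain ⟨k, hk⟩ := h6
  have h7 : (3 : ℤ) ∣ (y.den : ℤ) := by
    refine p3.dvd_of_dvd_pow (n := 2) ⟨-(k ^ 2 * d), ?_⟩
    rw [hk] at h5; linarith
  have h8 : 3 ∣ y.num.natAbs := by
    have : (3 : ℤ) ∣ y.num := ⟨k, hk⟩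
    omega
  have h9 : 3 ∣ y.den := by exact_mod_cast h7
  have := Nat.dvd_gcd h8 h9
  rw [y.reduced] at this
  omega

/-- Units of `ℚ(√d)` are `p`-th powers. -/
lemma unit_pow (d : ℤ) (hd : d < 0) (h3 : ¬ (3 : ℤ) ∣ d) (p : ℕ) (hp : Odd p)
    (u v : ℂ) (hu : u ∈ Qsqrt d) (hui : IsIntegral ℤ u) (hv : v ∈ Qsqrt d)
    (hvi : IsIntegral ℤ v) (huv : u * v = 1) :
    ∃ w : ℂ, w ∈ Qsqrt d ∧ IsIntegral ℤ w ∧ w ^ p = u := by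
  obtain ⟨T, N, hT, hN, hN0, hTN⟩ := trace_norm d hd u hu hui
  obtain ⟨T', N', hT', hN', hN0', -⟩ := trace_norm d hd v hv hvi
  have hNN : N * N' = 1 := by
    have : (N : ℂ) * N' = 1 := by
      rw [← hN, ← hN']
      calc u * conj u * (v * conj v) = (u * v) * conj (u * v) := by rw [map_mul]; ring
        _ = 1 := by rw [huv]; simp
    exact_mod_cast this
  have hN1 : N = 1 := by
    rcases Int.eq_one_or_neg_one_of_mul_eq_one hNN with h | h <;> omega
  subst hN1
  have hq : u ^ 2 = T * u - 1 := by
    rw [← hT]; push_cast at hN; linear_combination (-1 : ℂ) * hN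
  have hb1 : T ≤ 2 := by nlinarith
  have hb2 : -2 ≤ T := by nlinarith
  have hmem : ∀ n : ℤ, (n : ℂ) ∈ Qsqrt d := fun n => by
    simpa using ratCast_mem_Qsqrt d (n : ℚ)
  interval_cases T
  · have : (u + 1) ^ 2 = 0 := by push_cast at hq; linear_combination hq
    have hu1 : u = -1 := by
      have := pow_eq_zero_iff (two_ne_zero) |>.mp this
      linear_combination this
    exact ⟨u, hu, hui, by rw [hu1, hp.neg_one_pow]⟩
  · exfalso
    refine no_sqrt_neg_three d h3 (2 * u + 1) ?_ ?_ hd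
    · have := add_mem (mul_mem (hmem 2) hu) (hmem 1)
      simpa using this
    · push_cast at hq; linear_combination 4 * hq
  · have hu2 : u ^ 2 = -1 := by push_cast at hq; linear_combination hq
    obtain ⟨k, hk⟩ := hp
    rcases Nat.even_or_odd k with he | ho
    · exact ⟨u, hu, hui, by rw [hk, pow_add, pow_mul, hu2, he.neg_one_pow]; simp⟩
    · refine ⟨-u, neg_mem hu, hui.neg, ?_⟩
      rw [hk, pow_add, pow_mul, neg_sq, hu2, ho.neg_one_pow]; simp
  · exfalso
    refine no_sqrt_neg_three d h3 (2 * u + (-1 : ℤ)) ?_ ?_ hd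
    · have := add_mem (mul_mem (hmem 2) hu) (hmem (-1))
      simpa using this
    · push_cast at hq ⊢; linear_combination 4 * hq
  · have : (u - 1) ^ 2 = 0 := by push_cast at hq; linear_combination hq
    have hu1 : u = 1 := by
      have := pow_eq_zero_iff (two_ne_zero) |>.mp this
      linear_combination this
    exact ⟨u, hu, hui, by rw [hu1, one_pow]⟩

/-- If `p` does not divide the class number then an integer of `ℚ(√d)` whose norm is a `p`-th
power and which is coprime to its conjugate is a `p`-th power. -/
lemma exists_root (d : ℤ) (hd : d < 0) (h3 : ¬ (3 : ℤ) ∣ d) (p : ℕ) (hpp : p.Prime) (hp : Odd p)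
    (hcl : ¬ p ∣ NumberField.classNumber (Qsqrt d))
    (z : ℂ) (hz : z ∈ Qsqrt d) (hi : IsIntegral ℤ z) (T n : ℤ) (hn : n ≠ 0)
    (hT : z + conj z = T) (hN : z * conj z = ((n ^ p : ℤ) : ℂ)) (hcop : IsCoprime T n) :
    ∃ b : ℂ, b ∈ Qsqrt d ∧ IsIntegral ℤ b ∧ b ^ p = z := by
  have mk : ∀ w : ℂ, w ∈ Qsqrt d → IsIntegral ℤ w → ∃ a : 𝓞 (Qsqrt d), ((a : Qsqrt d) : ℂ) = w := by
    intro w hw hwi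
    have : IsIntegral ℤ (⟨w, hw⟩ : Qsqrt d) := by
      refine (isIntegral_algebraMap_iff (A := Qsqrt d) (B := ℂ) (algebraMap (Qsqrt d) ℂ).injective).mp ?_
      exact hwi
    exact ⟨⟨⟨w, hw⟩, this⟩, rfl⟩
  have mki : ∀ a : 𝓞 (Qsqrt d), IsIntegral ℤ ((a : Qsqrt d) : ℂ) := by
    intro a
    exact (RingOfIntegers.isIntegral_coe a).map (IsScalarTower.toAlgHom ℤ (Qsqrt d) ℂ)
  have inj : ∀ a b : 𝓞 (Qsqrt d), ((a : Qsqrt d) : ℂ) = ((b : Qsqrt d) : ℂ) → a = b := by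
    intro a b h
    exact RingOfIntegers.ext (Subtype.ext h)
  obtain ⟨a, ha⟩ := mk z hz hi
  obtain ⟨a', ha'⟩ := mk _ (conj_mem_Qsqrt d hd z hz) (conj_integral_s2 z hi)
  have hsum : a + a' = (T : 𝓞 (Qsqrt d)) := inj _ _ (by simp [ha, ha', hT])
  have hmul : a * a' = (n : 𝓞 (Qsqrt d)) ^ p := inj _ _ (by simp [ha, ha', hN])
  have hc : IsCoprime a a' := by
    have h1 : IsCoprime (T : 𝓞 (Qsqrt d)) ((n : 𝓞 (Qsqrt d)) ^ p) :=
      (hcop.map (Int.castRingHom (𝓞 (Qsqrt d)))).pow_right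
    rw [← hsum, ← hmul] at h1
    obtain ⟨r, s, hrs⟩ := h1
    exact ⟨r + s * a', r, by rw [← hrs]; ring⟩
  have hci : IsCoprime (Ideal.span {a}) (Ideal.span {a'}) :=
    Ideal.isCoprime_span_singleton_iff _ _ |>.mpr hc
  obtain ⟨I, hI⟩ := exists_eq_pow_of_mul_eq_pow_of_coprime hci
    (c := Ideal.span {(n : 𝓞 (Qsqrt d))}) (n := p)
    (by rw [Ideal.span_singleton_mul_span_singleton, hmul, Ideal.span_singleton_pow])
  have ha0 : a ≠ 0 := by
    rintro rfl
    rw [zero_mul] at hmul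
    exact pow_ne_zero p (Int.cast_ne_zero.mpr hn) hmul.symm
  have hI0 : I ≠ ⊥ := by
    rintro rfl
    rw [← Ideal.zero_eq_bot, zero_pow hpp.ne_zero, Ideal.zero_eq_bot, Ideal.span_singleton_eq_bot] at hI
    exact ha0 hI
  let J : nonZeroDivisors (Ideal (𝓞 (Qsqrt d))) := ⟨I, mem_nonZeroDivisors_of_ne_zero hI0⟩
  have hJp : ClassGroup.mk0 J ^ p = 1 := by
    rw [← map_pow, ClassGroup.mk0_eq_one_iff]
    change (I ^ p).IsPrincipal
    rw [← hI]
    exact ⟨a, rfl⟩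
  have hJ : ClassGroup.mk0 J = 1 := by
    have hco : p.Coprime (Nat.card (ClassGroup (𝓞 (Qsqrt d)))) := by
      rw [Nat.card_eq_fintype_card]
      exact (Nat.Prime.coprime_iff_not_dvd hpp).mpr hcl
    have h1 := orderOf_dvd_of_pow_eq_one hJp
    have h2 := orderOf_dvd_natCard (ClassGroup.mk0 J)
    exact orderOf_eq_one_iff.mp (Nat.eq_one_of_dvd_coprimes hco h1 h2)
  have hIp : I.IsPrincipal := (ClassGroup.mk0_eq_one_iff _).mp hJ
  obtain ⟨b, hb⟩ := hIp
  have hb' : I = Ideal.span {b} := hb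
  rw [hb', Ideal.span_singleton_pow, Ideal.span_singleton_eq_span_singleton] at hI
  obtain ⟨u, hu⟩ := hI.symm
  obtain ⟨w, hw, hwi, hwp⟩ := unit_pow d hd h3 p hp (((u : 𝓞 (Qsqrt d)) : Qsqrt d) : ℂ)
    (((↑u⁻¹ : 𝓞 (Qsqrt d)) : Qsqrt d) : ℂ) (SetLike.coe_mem _) (mki _) (SetLike.coe_mem _) (mki _)
    (by
      have h := Units.mul_inv u
      have h2 := congrArg (fun x : 𝓞 (Qsqrt d) => ((x : Qsqrt d) : ℂ)) h
      simpa using h2)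
  refine ⟨((b : Qsqrt d) : ℂ) * w, mul_mem (SetLike.coe_mem _) hw, (mki b).mul hwi, ?_⟩
  rw [mul_pow, hwp, ← ha, ← hu]
  simp

/-- Lucas sequence. -/
def lucV (T N : ℤ) : ℕ → ℤ
  | 0 => 2
  | 1 => T
  | (n + 2) => T * lucV T N (n + 1) - N * lucV T N n

lemma lucV_eq (T N : ℤ) (b c : ℂ) (h1 : b + c = T) (h2 : b * c = N) (n : ℕ) :
    b ^ n + c ^ n = lucV T N n := by
  induction n using Nat.twoStepInduction with
  | zero => simp [lucV]; norm_num
  | one => simp [lucV, h1]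
  | more n ih1 ih2 =>
    simp only [lucV]; push_cast; rw [← ih1, ← ih2, ← h1, ← h2]; ring

lemma lucV_odd_dvd (T N : ℤ) (k : ℕ) : T ∣ lucV T N (2 * k + 1) := by
  induction k with
  | zero => simp [lucV]
  | succ k ih =>
    change T ∣ T * lucV T N (2 * k + 1 + 1) - N * lucV T N (2 * k + 1)
    exact dvd_sub (dvd_mul_right _ _) (ih.mul_left _)

lemma lucV_mod_sq (T N : ℤ) (n : ℕ) :
    ∃ W, lucV T N (n + 2) = T ^ (n + 2) - (n + 2) * T ^ n * N + N ^ 2 * W := by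
  induction n using Nat.twoStepInduction with
  | zero => exact ⟨0, by simp [lucV]; ring⟩
  | one => exact ⟨0, by simp [lucV]; ring⟩
  | more n ih1 ih2 =>
    obtain ⟨W1, h1⟩ := ih1
    obtain ⟨W2, h2⟩ := ih2
    refine ⟨T * W2 + (n + 2) * T ^ n - N * W1, ?_⟩
    change T * lucV T N (n + 1 + 2) - N * lucV T N (n + 2) = _
    rw [h1, h2]; push_cast; ring

lemma lucV_two_pow (x M : ℤ) (hx : 2 ∣ x) (k : ℕ) :
    (2 : ℤ) ^ (k + 1) ∣ lucV (2 * x) (2 * M) (2 * k) ∧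
    (2 : ℤ) ^ (k + 2) ∣ lucV (2 * x) (2 * M) (2 * k + 1) := by
  obtain ⟨y, rfl⟩ := hx
  induction k with
  | zero => exact ⟨by simp [lucV], ⟨y, by simp [lucV]; ring⟩⟩
  | succ k ih =>
    obtain ⟨⟨a, ha⟩, ⟨b, hb⟩⟩ := ih
    have e1 : lucV (2 * (2 * y)) (2 * M) (2 * (k + 1)) = 2 ^ (k + 1 + 1) * (4 * y * b - M * a) := by
      change 2 * (2 * y) * lucV _ _ (2 * k + 1) - 2 * M * lucV _ _ (2 * k) = _
      rw [ha, hb]; ring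
    refine ⟨⟨_, e1⟩, ?_⟩
    change _ ∣ 2 * (2 * y) * lucV _ _ (2 * (k + 1)) - 2 * M * lucV _ _ (2 * k + 1)
    rw [e1, hb]
    exact ⟨2 * y * (4 * y * b - M * a) - M * b, by ring⟩

/-- First family: `1 - 4 K ^ p`. -/
lemma dvd_of_one_sub_four (d : ℤ) (hd : d < 0) (h3 : ¬ (3 : ℤ) ∣ d) (p : ℕ) (hpp : p.Prime)
    (hp : Odd p) (K : ℤ) (hK : (p : ℤ) < K) (hdK : d = 1 - 4 * K ^ p) :
    p ∣ NumberField.classNumber (Qsqrt d) := by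
  by_contra hcl
  have hp2 := hpp.two_le
  have hp3 : 3 ≤ p := by obtain ⟨k, hk⟩ := hp; omega
  have hs := sqrtC_sq d
  have hc := conj_of_sq_neg d hd _ hs
  set s := sqrtC d with hs_def
  have hsmem : s ∈ Qsqrt d := sqrtC_mem d
  have hdC : (d : ℂ) = 1 - 4 * (K : ℂ) ^ p := by rw [hdK]; push_cast; ring
  have hz : (1 + s) / 2 ∈ Qsqrt d := by
    have := add_mem (ratCast_mem_Qsqrt d (1 / 2)) (mul_mem (ratCast_mem_Qsqrt d (1 / 2)) hsmem)
    convert this using 1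
    push_cast; ring
  have hcz : conj ((1 + s) / 2) = (1 - s) / 2 := by
    simp only [map_div₀, map_add, map_one, hc, map_ofNat]; ring
  have hi : IsIntegral ℤ ((1 + s) / 2) := by
    refine ⟨X ^ 2 - X + C (K ^ p), by monicity!, ?_⟩
    simp only [eval₂_add, eval₂_sub, eval₂_X_pow, eval₂_X, eval₂_C]
    simp only [algebraMap_int_eq, eq_intCast]
    push_cast
    linear_combination hs / 4 + hdC / 4
  have hsum : (1 + s) / 2 + conj ((1 + s) / 2) = ((1 : ℤ) : ℂ) := by rw [hcz]; push_cast; ring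
  obtain ⟨b, hb, hbi, hbp⟩ := exists_root d hd h3 p hpp hp hcl ((1 + s) / 2) hz hi 1 K (by omega)
    hsum (by rw [hcz]; push_cast; linear_combination -hs / 4 - hdC / 4) isCoprime_one_left
  obtain ⟨T, N, hT, hN, -, -⟩ := trace_norm d hd b hb hbi
  have hNK : N = K := by
    have h : (N : ℂ) ^ p = (K : ℂ) ^ p := by
      rw [← hN, mul_pow, ← map_pow, hbp, hcz]; linear_combination -hs / 4 - hdC / 4
    have h' : N ^ p = K ^ p := by exact_mod_cast h
    exact hp.strictMono_pow.injective h'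
  subst hNK
  have hV : lucV T N p = 1 := by
    have h := lucV_eq T N b (conj b) hT hN p
    rw [← map_pow, hbp, hsum] at h
    exact_mod_cast h.symm
  have hT1 : T ∣ 1 := by
    obtain ⟨k, hk⟩ := hp
    rw [← hV, hk]; exact lucV_odd_dvd T N k
  obtain ⟨n, rfl⟩ : ∃ n, p = n + 2 := ⟨p - 2, by omega⟩
  obtain ⟨W, hW⟩ := lucV_mod_sq T N n
  rw [hV] at hW
  have hn : Odd n := by obtain ⟨k, hk⟩ := hp; exact ⟨k - 1, by omega⟩
  push_cast at hK
  rcases Int.isUnit_iff.mp (isUnit_of_dvd_one hT1) with rfl | rfl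
  · simp only [one_pow, mul_one] at hW
    have h0 : N * (N * W - (n + 2)) = 0 := by linarith
    have h1 : N * W - (n + 2) = 0 := (mul_eq_zero.mp h0).resolve_left (by omega)
    have h2 : N ∣ (n : ℤ) + 2 := ⟨W, by linarith⟩
    have := Int.le_of_dvd (by omega) h2
    omega
  · rw [hp.neg_one_pow, hn.neg_one_pow] at hW
    have h2 : N ∣ 2 := ⟨(n + 2) + N * W, by linarith⟩
    have := Int.le_of_dvd (by omega) h2
    omega

/-- Second family: `1 - 2 M ^ p`. -/
lemma dvd_of_one_sub_two (d : ℤ) (hd : d < 0) (h3 : ¬ (3 : ℤ) ∣ d) (p : ℕ) (hpp : p.Prime)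
    (hp : Odd p) (M : ℤ) (hM : (2 : ℤ) ^ p < M) (hMo : Odd M)
    (e : ℂ) (he : e ∈ Qsqrt d) (he2 : e ^ 2 = ((1 - 2 * M ^ p : ℤ) : ℂ)) :
    p ∣ NumberField.classNumber (Qsqrt d) := by
  by_contra hcl
  have hp2 := hpp.two_le
  have hp3 : 3 ≤ p := by obtain ⟨k, hk⟩ := hp; omega
  have hM0 : 0 < M := lt_trans (by positivity) hM
  have hMp : 0 < M ^ p := by positivity
  have hc := conj_of_sq_neg (1 - 2 * M ^ p) (by omega) e he2
  push_cast at he2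
  have hmem : ∀ n : ℤ, (n : ℂ) ∈ Qsqrt d := fun n => by
    simpa using ratCast_mem_Qsqrt d (n : ℚ)
  have hint : ∀ n : ℤ, IsIntegral ℤ (n : ℂ) := fun n => isIntegral_algebraMap (R := ℤ) (x := n)
  have hei : IsIntegral ℤ e := by
    refine IsIntegral.of_pow (n := 2) (by norm_num) ?_
    rw [he2]
    have := hint (1 - 2 * M ^ p)
    push_cast at this
    exact this
  set g : ℂ := ((1 - M ^ p : ℤ) : ℂ) + e with hg
  have hcg : conj g = ((1 - M ^ p : ℤ) : ℂ) - e := by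
    rw [hg, map_add, hc]; simp only [map_intCast]; ring
  have hgN : g * conj g = (((M ^ 2) ^ p : ℤ) : ℂ) := by
    rw [hcg, hg]; push_cast; rw [← pow_mul, mul_comm 2 p, pow_mul]; linear_combination -he2
  have hcop : IsCoprime (2 * (1 - M ^ p)) (M ^ 2) := by
    refine IsCoprime.pow_right ?_
    refine IsCoprime.mul_left ?_ ?_
    · obtain ⟨k, hk⟩ := hMo
      exact ⟨-k, 1, by rw [hk]; ring⟩
    · refine ⟨1, M ^ (p - 1), ?_⟩
      rw [← pow_succ, Nat.sub_add_cancel (by omega)]; ring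
  obtain ⟨b, hb, hbi, hbp⟩ := exists_root d hd h3 p hpp hp hcl g (add_mem (hmem _) he)
    ((hint _).add hei) (2 * (1 - M ^ p)) (M ^ 2) (by positivity)
    (by rw [hcg, hg]; push_cast; ring) hgN hcop
  obtain ⟨A, B, hA, hB, hB0, -⟩ := trace_norm d hd b hb hbi
  have hBM : B = M ^ 2 := by
    have h : (B : ℂ) ^ p = (((M ^ 2) ^ p : ℤ) : ℂ) := by
      rw [← hB, mul_pow, ← map_pow, hbp, hgN]
    have h' : B ^ p = (M ^ 2) ^ p := by exact_mod_cast h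
    exact hp.strictMono_pow.injective h'
  obtain ⟨k, hk⟩ := hp
  have hb0 : b ≠ 0 := by
    rintro rfl
    rw [zero_mul] at hB
    have : B = 0 := by exact_mod_cast hB.symm
    have : 0 < M ^ 2 := by positivity
    omega
  have hge : (1 + e) ^ 2 = 2 * b ^ p := by
    rw [hbp, hg]; push_cast; linear_combination he2
  have h2b : (2 * b) ^ k ≠ 0 := pow_ne_zero _ (mul_ne_zero two_ne_zero hb0)
  set δ : ℂ := 2 ^ k * (1 + e) / (2 * b) ^ k with hδ
  have hδ2 : δ ^ 2 = 2 * b := by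
    rw [hδ, div_pow, mul_pow, hge, div_eq_iff (pow_ne_zero _ h2b), hk]
    ring
  have hδp : δ ^ p = 2 ^ k * (1 + e) := by
    rw [hk, pow_succ, pow_mul, hδ2, hδ]; field_simp
  have hδmem : δ ∈ Qsqrt d := by
    have h2 : (2 : ℂ) ∈ Qsqrt d := by simpa using hmem 2
    have h1 : (1 : ℂ) ∈ Qsqrt d := by simpa using hmem 1
    exact div_mem (mul_mem (pow_mem h2 _) (add_mem h1 he)) (pow_mem (mul_mem h2 hb) _)
  have hδi : IsIntegral ℤ δ := by
    refine IsIntegral.of_pow (n := 2) (by norm_num) ?_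
    rw [hδ2]
    have h2 := hint 2
    push_cast at h2
    exact h2.mul hbi
  obtain ⟨T, N, hT, hN, hN0, -⟩ := trace_norm d hd δ hδmem hδi
  have hNM : N = 2 * M := by
    have h : (N : ℂ) ^ 2 = (2 * M) ^ 2 := by
      rw [← hN, mul_pow, ← map_pow, hδ2, map_mul, map_ofNat]
      have : b * conj b = (M : ℂ) ^ 2 := by rw [hB, hBM]; push_cast; ring
      linear_combination 4 * this
    have h' : N ^ 2 = (2 * M) ^ 2 := by exact_mod_cast h
    exact (pow_left_inj₀ hN0 (by omega) two_ne_zero).mp h'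
  subst hNM
  have hV : lucV T (2 * M) p = 2 ^ (k + 1) := by
    have h := lucV_eq T (2 * M) δ (conj δ) hT hN p
    rw [← map_pow, hδp] at h
    simp only [map_mul, map_pow, map_add, map_one, map_ofNat, hc] at h
    have h' : ((lucV T (2 * M) p : ℤ) : ℂ) = 2 ^ (k + 1) := by rw [← h]; ring
    exact_mod_cast h'
  have hTd : T ∣ 2 ^ (k + 1) := by rw [← hV, hk]; exact lucV_odd_dvd T _ k
  obtain ⟨n, hn⟩ : ∃ n, p = n + 2 := ⟨p - 2, by omega⟩
  obtain ⟨W, hW⟩ := lucV_mod_sq T (2 * M) n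
  rw [← hn, hV] at hW
  have hmod : 2 * M ∣ T ^ p - 2 ^ (k + 1) :=
    ⟨(n + 2) * T ^ n - (2 * M) * W, by rw [hW]; ring⟩
  have hT2 : (2 : ℤ) ∣ T := by
    have h1 : (2 : ℤ) ∣ T ^ p - 2 ^ (k + 1) := (dvd_mul_right _ _).trans hmod
    have h2 : (2 : ℤ) ∣ T ^ p := (dvd_sub_left (dvd_pow_self 2 (by omega))).mp h1
    exact Int.prime_two.dvd_of_dvd_pow h2
  obtain ⟨x, rfl⟩ := hT2
  have hxodd : ¬ (2 : ℤ) ∣ x := by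
    intro hx
    have h := (lucV_two_pow x M hx k).2
    rw [← hk, hV] at h
    have := Int.le_of_dvd (by positivity) h
    rw [pow_succ _ (k + 1)] at this
    have : (0 : ℤ) < 2 ^ (k + 1) := by positivity
    omega
  have hxu : IsUnit x := by
    have hcx : IsCoprime x (2 ^ (k + 1)) :=
      (((Int.prime_two.coprime_iff_not_dvd).mpr hxodd).symm).pow_right
    exact hcx.isUnit_of_dvd' dvd_rfl ((dvd_mul_left _ _).trans hTd)
  have hlt : (2 : ℤ) ^ (k + 1) < 2 ^ p := pow_lt_pow_right₀ (by norm_num) (by omega)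
  have hpos : (0 : ℤ) < 2 ^ (k + 1) := by positivity
  have hodd : Odd p := ⟨k, hk⟩
  rcases Int.isUnit_iff.mp hxu with rfl | rfl
  · rw [mul_one] at hmod
    have := Int.le_of_dvd (by omega) hmod
    omega
  · rw [mul_neg_one, hodd.neg_pow] at hmod
    have h2 : 2 * M ∣ 2 ^ p + 2 ^ (k + 1) := by
      obtain ⟨w, hw⟩ := hmod
      exact ⟨-w, by linarith⟩
    have := Int.le_of_dvd (by omega) h2
    omega

lemma squarefree_dvd (t h : ℕ) (ht : Squarefree t) (H : ∀ p, p.Prime → p ∣ t → p ∣ h) : t ∣ h := by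
  rw [← Nat.prod_primeFactors_of_squarefree ht]
  refine Finset.prod_primes_dvd h ?_ ?_
  · intro p hp
    exact (Nat.prime_of_mem_primeFactors hp).prime
  · intro p hp
    exact H p (Nat.prime_of_mem_primeFactors hp) (Nat.dvd_of_mem_primeFactors hp)

lemma main_aux (t r : ℕ) (ht3 : 3 ≤ t) (htodd : Odd t) (htsf : Squarefree t) (hr : t ≤ r) (d : ℤ)
    (hd : d = 4 * (1 - 2 * ((3 : ℤ) ^ r) ^ t) ^ t) :
    t ∣ NumberField.classNumber (Qsqrt d) ∧ t ∣ NumberField.classNumber (Qsqrt (d + 1)) := by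
  have h3r : (3 : ℤ) ∣ ((3 : ℤ) ^ r) ^ t :=
    dvd_pow (dvd_pow_self 3 (by omega)) (by omega)
  have hbig : (3 : ℤ) ^ t ≤ 3 ^ r := pow_le_pow_right₀ (by norm_num) hr
  have h2t : (2 : ℤ) ^ t < 3 ^ t := pow_lt_pow_left₀ (by norm_num) (by norm_num) (by omega)
  have htt : (t : ℤ) < 2 ^ t := by exact_mod_cast Nat.lt_two_pow_self
  have hm1 : (1 : ℤ) ≤ 3 ^ r := one_le_pow₀ (by norm_num)
  have hmt : (3 : ℤ) ^ r ≤ (3 ^ r) ^ t := le_self_pow₀ hm1 (by omega)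
  set m : ℤ := 3 ^ r with hm
  have hmo : Odd m := Odd.pow (by decide)
  set c : ℤ := m ^ t with hc
  set k : ℤ := 2 * c - 1 with hk
  have hE : 1 - 2 * c = -k := by rw [hk]; ring
  have hkt : (1 : ℤ) ≤ k ^ t := one_le_pow₀ (by omega)
  have hdk : d = -4 * k ^ t := by rw [hd, hE, htodd.neg_pow]; ring
  have hk3 : k ≡ -1 [ZMOD 3] := (Int.emod_emod_of_dvd _ (dvd_refl 3)).symm.trans (by
    change k % 3 % 3 = -1 % 3
    omega)
  have hkt3 : k ^ t ≡ -1 [ZMOD 3] := by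
    have := hk3.pow t
    rwa [htodd.neg_one_pow] at this
  have hkt3' : k ^ t % 3 = 2 := hkt3
  constructor
  · refine squarefree_dvd t _ htsf ?_
    intro p hpp hpt
    obtain ⟨j, hj⟩ := hpt
    have hpodd : Odd p := by rw [hj] at htodd; exact Nat.Odd.of_mul_left htodd
    have hj0 : j ≠ 0 := by rintro rfl; omega
    have hple : p ≤ t := Nat.le_of_dvd (by omega) ⟨j, hj⟩
    obtain ⟨l, hl⟩ := htodd
    have hk0 : (k : ℂ) ≠ 0 := by
      have : k ≠ 0 := by omega
      exact_mod_cast this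
    refine dvd_of_one_sub_two d (by omega) (by omega) p hpp hpodd (m ^ j) ?_ hmo.pow
      (((1 / (2 * k ^ l) : ℚ) : ℂ) * sqrtC d) (mul_mem (ratCast_mem_Qsqrt d _) (sqrtC_mem d)) ?_
    · calc (2 : ℤ) ^ p ≤ 2 ^ t := pow_le_pow_right₀ (by norm_num) hple
        _ < m := by omega
        _ ≤ m ^ j := le_self_pow₀ hm1 hj0
    · rw [← pow_mul, mul_comm j p, ← hj, ← hc, hE, mul_pow, sqrtC_sq, hdk, hl]
      push_cast
      field_simp
      ring
  · refine squarefree_dvd t _ htsf ?_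
    intro p hpp hpt
    obtain ⟨j, hj⟩ := hpt
    have hpodd : Odd p := by rw [hj] at htodd; exact Nat.Odd.of_mul_left htodd
    have hj0 : j ≠ 0 := by rintro rfl; omega
    have hple : p ≤ t := Nat.le_of_dvd (by omega) ⟨j, hj⟩
    refine dvd_of_one_sub_four (d + 1) (by omega) (by omega) p hpp hpodd (k ^ j) ?_ ?_
    · calc (p : ℤ) ≤ t := by exact_mod_cast hple
        _ < k := by omega
        _ ≤ k ^ j := le_self_pow₀ (by omega) hj0
    · rw [← pow_mul, mul_comm j p, ← hj, hdk]; ring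

/-- For every odd square-free integer `t ≥ 3` there are infinitely many integers `d`
(concretely, `d = 4 (1 - 2 m ^ t) ^ t` with `m = q ^ r`, `q` an odd prime, `r ≥ 1`) such that
`t` divides the class numbers of both `ℚ(√d)` and `ℚ(√(d+1))`. -/
theorem infinitely_many_consecutive_d_with_t_dvd_classNumber
    (t : ℕ) (ht3 : 3 ≤ t) (htodd : Odd t) (htsf : Squarefree t) :
    {d : ℤ | (∃ q r : ℕ, q.Prime ∧ Odd q ∧ 0 < r ∧
        d = 4 * (1 - 2 * ((q : ℤ) ^ r) ^ t) ^ t) ∧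
      t ∣ NumberField.classNumber (Qsqrt d) ∧
      t ∣ NumberField.classNumber (Qsqrt (d + 1))}.Infinite := by
  refine Set.infinite_of_injective_forall_mem
    (f := fun n : ℕ => 4 * (1 - 2 * ((3 : ℤ) ^ (t + n)) ^ t) ^ t) ?_ ?_
  · intro a b hab
    have h1 : (1 - 2 * ((3 : ℤ) ^ (t + a)) ^ t) ^ t = (1 - 2 * ((3 : ℤ) ^ (t + b)) ^ t) ^ t := by
      have h : 4 * (1 - 2 * ((3 : ℤ) ^ (t + a)) ^ t) ^ t
        = 4 * (1 - 2 * ((3 : ℤ) ^ (t + b)) ^ t) ^ t := hab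
      linarith
    have h2 := htodd.strictMono_pow.injective h1
    have h3 : ((3 : ℤ) ^ (t + a)) ^ t = ((3 : ℤ) ^ (t + b)) ^ t := by linarith
    have h4 := htodd.strictMono_pow.injective h3
    have h5 := pow_right_injective₀ (a := (3 : ℤ)) (by norm_num) (by norm_num) h4
    omega
  · intro n
    refine ⟨⟨3, t + n, by norm_num, by decide, by omega, by norm_num⟩, ?_⟩
    exact main_aux t (t + n) ht3 htodd htsf (by omega) _ rfl
end

section
/- Let m ≥ 3 be an odd integer. Then for all but finitely many primes p, the prime p divides the class number of the imaginary quadratic field ℚ(√(1 − 2m^p)); i.e., the set of primes p such that p does not divide the class number of ℚ(√(1 − 2m^p)) is finite. -/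
open Polynomial NumberField

lemma aux_pow_general {R : Type*} [CommRing R] (x : R) (k : ℕ) :
    ∃ y : R, (1 + 4 * x) ^ k = 1 + 4 * k * x + 16 * x ^ 2 * y := by
  induction k with
  | zero => exact ⟨0, by simp⟩
  | succ k ih =>
    obtain ⟨y, hy⟩ := ih
    refine ⟨k + y + 4 * x * y, ?_⟩
    rw [pow_succ, hy]; push_cast; ring

lemma aux_pow_two_adic {R : Type*} [CommRing R] (x : R) (k : ℕ) (e : ℕ) :
    ∃ y : R, (1 + 4 * x) ^ (2 ^ e * k)
      = 1 + 4 * (2 ^ e * k) * x + 8 * 2 ^ e * x ^ 2 * y := by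
  induction e with
  | zero =>
    obtain ⟨y, hy⟩ := aux_pow_general x k
    exact ⟨2 * y, by simp only [pow_zero, one_mul]; rw [hy]; ring⟩
  | succ e ih =>
    obtain ⟨y, hy⟩ := ih
    refine ⟨y + 2 ^ e * (k + 2 * x * y) ^ 2, ?_⟩
    have : 2 ^ (e + 1) * k = (2 ^ e * k) * 2 := by ring
    rw [this, pow_mul, hy]; ring

lemma aux_mod_five (k : ℕ) :
    ∃ y : ℤ, (((⟨1, 4⟩ : ℤ√(-5)) ^ k)).re = 1 + 5 * y := by
  induction k with
  | zero => exact ⟨0, by simp⟩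
  | succ k ih =>
    obtain ⟨y, hy⟩ := ih
    refine ⟨y - 4 * ((⟨1, 4⟩ : ℤ√(-5)) ^ k).im, ?_⟩
    rw [pow_succ, Zsqrtd.re_mul, hy]; ring

lemma arith_core (u : ℤ) (hu : 1 ≤ u) (n : ℕ)
    (h : ((⟨1, 1⟩ : ℤ√(-1 - 4 * u)) * ⟨-2 * u, 1⟩ ^ n).re = 1 ∨
      ((⟨1, 1⟩ : ℤ√(-1 - 4 * u)) * ⟨-2 * u, 1⟩ ^ n).re = -1) : n = 0 := by
  set z : ℤ√(-1 - 4 * u) := ⟨1, 1⟩ with hz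
  set ε : ℤ√(-1 - 4 * u) := ⟨-2 * u, 1⟩ with hε
  set x : ℤ√(-1 - 4 * u) := ⟨u * (1 - u), u⟩ with hx
  have hε2 : ε ^ 2 = -(1 + 4 * x) := by
    rw [pow_two, hε, hx]
    ext <;> simp <;> ring
  have key (k : ℕ) : ε ^ (2 * k) = (1 + 4 * x) ^ k ∨ ε ^ (2 * k) = -(1 + 4 * x) ^ k := by
    rw [pow_mul, hε2]
    rcases neg_one_pow_eq_or (ℤ√(-1 - 4 * u)) k with h' | h' <;> rw [neg_pow, h'] <;> simp
  rcases Nat.even_or_odd' n with ⟨k, rfl | rfl⟩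
  · by_contra hk0
    have hk : k ≠ 0 := by omega
    obtain ⟨e, k', hk', rfl⟩ := Nat.exists_eq_two_pow_mul_odd hk
    obtain ⟨y, hy⟩ := aux_pow_two_adic x k' e
    have hre : (z * (1 + 4 * x) ^ (2 ^ e * k')).re
        = 1 - 20 * (2 ^ e * k') * u ^ 2 + 8 * 2 ^ e * u ^ 2 *
          (z * (⟨1 - u, 1⟩ : ℤ√(-1 - 4 * u)) ^ 2 * y).re := by
      have hxu : x = (u : ℤ√(-1 - 4 * u)) * ⟨1 - u, 1⟩ := by
        rw [hx]; ext <;> simp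
      have : z * (1 + 4 * x) ^ (2 ^ e * k') = z + ((4 * (2 ^ e * k') : ℤ) : ℤ√(-1 - 4 * u)) * (z * x)
        + ((8 * 2 ^ e * u ^ 2 : ℤ) : ℤ√(-1 - 4 * u)) * (z * (⟨1 - u, 1⟩) ^ 2 * y) := by
        rw [hy]; push_cast
        rw [hxu]; ring
      rw [this, Zsqrtd.re_add, Zsqrtd.re_add, Zsqrtd.re_smul, Zsqrtd.re_smul]
      rw [hz, hx]
      simp only [Zsqrtd.re_mul]
      ring
    set r := (z * (⟨1 - u, 1⟩ : ℤ√(-1 - 4 * u)) ^ 2 * y).re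
    have h2 : (z * (1 + 4 * x) ^ (2 ^ e * k')).re = 1 ∨ (z * (1 + 4 * x) ^ (2 ^ e * k')).re = -1 := by
      rcases key (2 ^ e * k') with h' | h' <;> rw [h'] at h
      · exact h
      · rw [mul_neg, Zsqrtd.re_neg] at h
        omega
    rw [hre] at h2
    rcases h2 with h2 | h2
    · have h3 : (4 * 2 ^ e * u ^ 2) * (5 * (k' : ℤ)) = (4 * 2 ^ e * u ^ 2) * (2 * r) := by
        linarith
      have h4 := mul_left_cancel₀ (by positivity) h3
      obtain ⟨j, rfl⟩ := hk'
      push_cast at h4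
      omega
    · have : (4 : ℤ) * (-5 * (2 ^ e * k') * u ^ 2 + 2 * 2 ^ e * u ^ 2 * r) = -2 := by linarith
      omega
  · exfalso
    set zb : ℤ√(-1 - 4 * u) := ⟨1, -1⟩ with hzb
    have hmz : ((1 + 2 * u : ℤ) : ℤ√(-1 - 4 * u)) * z = ε * zb := by
      rw [hz, hzb, hε]
      ext <;> simp <;> ring
    have h1 : ((1 + 2 * u : ℤ) : ℤ√(-1 - 4 * u)) * (z * ε ^ (2 * k + 1)) = zb * ε ^ (2 * (k + 1)) := by
      rw [← mul_assoc, hmz]; ring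
    have h1' := congrArg Zsqrtd.re h1
    rw [Zsqrtd.re_smul] at h1'
    obtain ⟨y, hy⟩ := aux_pow_general x (k + 1)
    have h2 : (zb * (1 + 4 * x) ^ (k + 1)).re = 1 + 2 * u ∨
        (zb * (1 + 4 * x) ^ (k + 1)).re = -(1 + 2 * u) := by
      rcases key (k + 1) with h' | h' <;> rw [h'] at h1' <;> try rw [mul_neg, Zsqrtd.re_neg] at h1'
      all_goals
        rcases h with h | h <;> rw [h] at h1'
        · omega
        · omega
    have hre : ∃ w : ℤ, (zb * (1 + 4 * x) ^ (k + 1)).re = 1 + 4 * u * w := by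
      have hxu : x = (u : ℤ√(-1 - 4 * u)) * ⟨1 - u, 1⟩ := by
        rw [hx]; ext <;> simp
      refine ⟨(zb * (((k + 1 : ℕ) : ℤ√(-1 - 4 * u)) * ⟨1 - u, 1⟩ + 4 * x * ⟨1 - u, 1⟩ * y)).re, ?_⟩
      rw [← Zsqrtd.re_smul]
      change _ = zb.re + _
      rw [← Zsqrtd.re_add, hy]
      congr 1
      push_cast
      rw [hxu]; ring
    obtain ⟨w, hw⟩ := hre
    rcases h2 with h2 | h2
    · have : (2 * u) * (2 * w) = (2 * u) * 1 := by linarith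
      have := mul_left_cancel₀ (by positivity) this
      omega
    · have h3 : u * (-2 * w - 1) = 1 := by linarith
      have hu1 : u = 1 := by
        have := Int.eq_one_or_neg_one_of_mul_eq_one h3
        omega
      subst hu1
      obtain ⟨c, hc⟩ := aux_mod_five (k + 1)
      have hx1 : (1 + 4 * x) = (⟨1, 4⟩ : ℤ√(-5)) := by
        rw [hx]; ext <;> simp
      have h5 : (zb * (1 + 4 * x) ^ (k + 1)).re = (((⟨1, 4⟩ : ℤ√(-5)) ^ (k+1))).re
         + 5 * (((⟨1, 4⟩ : ℤ√(-5)) ^ (k+1))).im := by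
        rw [hx1, hzb, Zsqrtd.re_mul]
        simp
      rw [h5, hc] at h2
      omega

lemma arith_two (u : ℤ) (hu : 1 ≤ u) (a e : ℤ) (n : ℕ) (ha : Odd a)
    (he : e = a ^ 2 - 2 * (1 + 2 * u)) (h : ((⟨a, 1⟩ : ℤ√e) ^ (2 * n + 1)).re = 2 ^ n) :
    n = 0 := by
  have hdvd : a ∣ 2 ^ n := by
    have h1 : (⟨a, 1⟩ : ℤ√e) + star (⟨a, 1⟩ : ℤ√e) ∣
        (⟨a, 1⟩ : ℤ√e) ^ (2 * n + 1) + star (⟨a, 1⟩ : ℤ√e) ^ (2 * n + 1) :=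
      Odd.add_dvd_pow_add_pow _ _ ⟨n, rfl⟩
    have h2 : (⟨a, 1⟩ : ℤ√e) + star (⟨a, 1⟩ : ℤ√e) = ((2 * a : ℤ) : ℤ√e) := by
      ext <;> simp; ring
    rw [h2, Zsqrtd.intCast_dvd, ← star_pow, Zsqrtd.re_add, Zsqrtd.re_star, h] at h1
    have h3 : 2 * a ∣ 2 * 2 ^ n := by simpa [two_mul] using h1.1
    exact Int.dvd_of_mul_dvd_mul_left two_ne_zero h3
  have ha1 : a = 1 ∨ a = -1 := by
    have hc : IsCoprime a (2 ^ n) := IsCoprime.pow_right (by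
      obtain ⟨k, rfl⟩ := ha
      exact ⟨1, -k, by ring⟩)
    exact Int.isUnit_iff.1 (hc.isUnit_of_dvd' dvd_rfl hdvd)
  have he' : e = -1 - 4 * u := by
    rcases ha1 with rfl | rfl <;> rw [he] <;> ring
  subst he'
  have h4 : ((⟨1, 1⟩ : ℤ√(-1 - 4 * u)) ^ (2 * n + 1)).re = 2 ^ n ∨
      ((⟨1, 1⟩ : ℤ√(-1 - 4 * u)) ^ (2 * n + 1)).re = -2 ^ n := by
    rcases ha1 with rfl | rfl
    · exact Or.inl h
    · right
      have : (⟨-1, 1⟩ : ℤ√(-1 - 4 * u)) = - star ⟨1, 1⟩ := by ext <;> simp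
      rw [this, Odd.neg_pow ⟨n, rfl⟩, Zsqrtd.re_neg, ← star_pow, Zsqrtd.re_star] at h
      omega
  have h5 : (⟨1, 1⟩ : ℤ√(-1 - 4 * u)) ^ (2 * n + 1) =
      ((2 ^ n : ℤ) : ℤ√(-1 - 4 * u)) * (⟨1, 1⟩ * ⟨-2 * u, 1⟩ ^ n) := by
    have : (⟨1, 1⟩ : ℤ√(-1 - 4 * u)) ^ 2 = 2 * ⟨-2 * u, 1⟩ := by
      rw [pow_two]; ext <;> simp; ring
    rw [pow_succ, pow_mul, this]; push_cast; ring
  rw [h5, Zsqrtd.re_smul] at h4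
  refine arith_core u hu n ?_
  have h2n : (2 : ℤ) ^ n ≠ 0 := by positivity
  rcases h4 with h4 | h4
  · left
    exact mul_left_cancel₀ h2n (by rw [h4, mul_one])
  · right
    exact mul_left_cancel₀ h2n (by rw [h4]; ring)

lemma rat_of_isIntegral (q : ℚ) (h : IsIntegral ℤ (q : ℂ)) : ∃ k : ℤ, (k : ℚ) = q := by
  have h1 : IsIntegral ℤ (algebraMap ℚ ℂ q) := by simpa using h
  have h2 : IsIntegral ℤ q :=
    (isIntegral_algebraMap_iff (algebraMap ℚ ℂ).injective).1 h1
  obtain ⟨k, hk⟩ := IsIntegrallyClosed.isIntegral_iff.1 h2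
  exact ⟨k, by simpa using hk⟩

lemma sq_of_rat (D e : ℤ) (q : ℚ) (h : q ^ 2 * D = e) : ∃ s : ℤ, e * D = s * s := by
  have h1 : IsIntegral ℤ (((q * D : ℚ) : ℂ)) := by
    refine IsIntegral.of_pow (n := 2) (by norm_num) ?_
    have : (((q * D : ℚ) : ℂ)) ^ 2 = ((e * D : ℤ) : ℂ) := by
      have : (q * D) ^ 2 = ((e * D : ℤ) : ℚ) := by
        push_cast; rw [← h]; ring
      exact_mod_cast this
    rw [this]
    exact isIntegral_algebraMap (R := ℤ) (A := ℂ) (x := e * D)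
  obtain ⟨s, hs⟩ := rat_of_isIntegral _ h1
  refine ⟨s, ?_⟩
  have : (s : ℚ) * s = e * D := by rw [hs, ← h]; ring
  exact_mod_cast this.symm

lemma not_sq_mod_four (x s : ℤ) (h : x = s * s) (hx : x % 4 = 2 ∨ x % 4 = 3) : False := by
  have : s % 4 = 0 ∨ s % 4 = 1 ∨ s % 4 = 2 ∨ s % 4 = 3 := by omega
  subst h
  rcases this with h | h | h | h <;> simp [Int.mul_emod, h] at hx

lemma theta_re (θ : ℂ) (D : ℤ) (hD : D < 0) (hθ : θ ^ 2 = D) : θ.re = 0 := by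
  have h1 := congrArg Complex.re hθ
  have h2 := congrArg Complex.im hθ
  simp [pow_two] at h1 h2
  have hD' : (D : ℝ) < 0 := by exact_mod_cast hD
  by_contra h
  have : θ.im = 0 := by
    have : θ.re * θ.im = 0 := by linarith
    exact (mul_eq_zero.1 this).resolve_left h
  rw [this] at h1
  nlinarith [mul_self_nonneg θ.re]

lemma theta_conj (θ : ℂ) (D : ℤ) (hD : D < 0) (hθ : θ ^ 2 = D) :
    (starRingEnd ℂ) θ = -θ := by
  have := theta_re θ D hD hθ
  apply Complex.ext <;> simp [this]

lemma int_data (θ : ℂ) (D : ℤ) (hD : D < 0) (hθ : θ ^ 2 = D) (a b : ℚ)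
    (h : IsIntegral ℤ ((a : ℂ) + b * θ)) :
    (∃ T : ℤ, (T : ℚ) = 2 * a) ∧ ∃ N : ℤ, (N : ℚ) = a ^ 2 - D * b ^ 2 := by
  have hc : IsIntegral ℤ ((a : ℂ) - b * θ) := by
    have := h.map (starRingEnd ℂ).toIntAlgHom
    have h2 : (starRingEnd ℂ).toIntAlgHom ((a : ℂ) + b * θ) = (a : ℂ) - b * θ := by
      change (starRingEnd ℂ) ((a : ℂ) + b * θ) = _
      rw [map_add, map_mul, theta_conj θ D hD hθ, map_ratCast, map_ratCast]; ring
    rwa [h2] at this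
  constructor
  · apply rat_of_isIntegral
    have h3 : ((2 * a : ℚ) : ℂ) = ((a : ℂ) + b * θ) + (a - b * θ) := by push_cast; ring
    rw [h3]
    exact h.add hc
  · apply rat_of_isIntegral
    have h3 : ((a ^ 2 - D * b ^ 2 : ℚ) : ℂ) = ((a : ℂ) + b * θ) * (a - b * θ) := by
      push_cast; rw [← hθ]; ring
    rw [h3]
    exact h.mul hc

lemma mem_form (θ : ℂ) (D : ℤ) (hD : D < 0) (hθ : θ ^ 2 = D) (x : ℂ)
    (hx : x ∈ IntermediateField.adjoin ℚ {θ}) : ∃ a b : ℚ, x = a + b * θ := by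
  induction hx using IntermediateField.adjoin_induction with
  | mem x hx => exact ⟨0, 1, by simpa using hx⟩
  | algebraMap q => exact ⟨q, 0, by simp⟩
  | add x y _ _ hx hy =>
    obtain ⟨a, b, rfl⟩ := hx
    obtain ⟨c, d, rfl⟩ := hy
    exact ⟨a + c, b + d, by push_cast; ring⟩
  | mul x y _ _ hx hy =>
    obtain ⟨a, b, rfl⟩ := hx
    obtain ⟨c, d, rfl⟩ := hy
    exact ⟨a * c + b * d * D, a * d + b * c, by push_cast; rw [← hθ]; ring⟩
  | inv x _ hx =>
    obtain ⟨a, b, rfl⟩ := hx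
    by_cases h0 : a ^ 2 - D * b ^ 2 = 0
    · have hD' : (D : ℚ) < 0 := by exact_mod_cast hD
      have hb : b = 0 := by
        by_contra hb
        have : 0 < b ^ 2 := by positivity
        nlinarith [sq_nonneg a]
      have ha : a = 0 := by
        rw [hb] at h0
        simpa using h0
      exact ⟨0, 0, by simp [ha, hb]⟩
    · refine ⟨a / (a ^ 2 - D * b ^ 2), -b / (a ^ 2 - D * b ^ 2), ?_⟩
      have h0' : (a : ℂ) ^ 2 - D * b ^ 2 ≠ 0 := by exact_mod_cast h0
      apply inv_eq_of_mul_eq_one_right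
      push_cast
      have h3 : ((a : ℂ) + b * θ) * (a / (a ^ 2 - D * b ^ 2) + -b / (a ^ 2 - D * b ^ 2) * θ)
          = (a ^ 2 - θ ^ 2 * b ^ 2) / (a ^ 2 - D * b ^ 2) := by ring
      rw [h3, hθ, div_self h0']

lemma unit_pow_four_s3 (θ : ℂ) (D : ℤ) (hD : D < 0) (hθ : θ ^ 2 = D) (hD4 : D % 4 = 3) (a b c d : ℚ)
    (h : IsIntegral ℤ ((a : ℂ) + b * θ)) (h' : IsIntegral ℤ ((c : ℂ) + d * θ))
    (hmul : ((a : ℂ) + b * θ) * (c + d * θ) = 1) : ((a : ℂ) + b * θ) ^ 4 = 1 := by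
  obtain ⟨⟨T, hT⟩, N, hN⟩ := int_data θ D hD hθ a b h
  obtain ⟨-, N', hN'⟩ := int_data θ D hD hθ c d h'
  have hD' : (D : ℚ) < 0 := by exact_mod_cast hD
  have hNN : N * N' = 1 := by
    have h1 := congrArg (starRingEnd ℂ) hmul
    simp only [map_mul, map_add, theta_conj θ D hD hθ, map_ratCast, map_one] at h1
    have h2 : (((a ^ 2 - D * b ^ 2) * (c ^ 2 - D * d ^ 2) : ℚ) : ℂ) = 1 := by
      push_cast
      rw [← hθ]
      linear_combination (((a : ℂ) + b * -θ) * (c + d * -θ)) * hmul + h1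
    rw [← hN, ← hN'] at h2
    exact_mod_cast h2
  have hN1 : N = 1 := by
    have h0 : 0 ≤ N := by
      have : (0 : ℚ) ≤ N := by rw [hN]; nlinarith [sq_nonneg a, sq_nonneg b]
      exact_mod_cast this
    rcases Int.eq_one_or_neg_one_of_mul_eq_one hNN with h | h <;> omega
  rw [hN1] at hN
  push_cast at hN
  have hT2 : T ^ 2 ≤ 4 := by
    have : (T : ℚ) ^ 2 ≤ 4 := by rw [hT]; nlinarith [sq_nonneg b]
    exact_mod_cast this
  have hTl : -2 ≤ T := by nlinarith
  have hTu : T ≤ 2 := by nlinarith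
  have hq : (2 * b) ^ 2 * D = ((T ^ 2 - 4 : ℤ) : ℚ) := by
    push_cast; rw [hT]; linarith
  have hsq := sq_of_rat D _ _ hq
  obtain ⟨s, hs⟩ := hsq
  have hNC : (a : ℂ) ^ 2 - D * b ^ 2 = 1 := by exact_mod_cast hN.symm
  have hTC : (2 : ℂ) * a = T := by exact_mod_cast hT.symm
  have hquad : ((a : ℂ) + b * θ) ^ 2 = T * (a + b * θ) - 1 := by
    rw [← hTC, ← hNC, ← hθ]; ring
  generalize hw : (a : ℂ) + b * θ = w at hquad ⊢
  have hb0 (h4 : T ^ 2 = 4) : b = 0 := by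
    rw [h4] at hq
    have : (2 * b) ^ 2 * D = 0 := by simpa using hq
    rcases mul_eq_zero.1 this with h | h
    · simpa using h
    · exact absurd h hD'.ne
  interval_cases T
  · have : b = 0 := hb0 (by norm_num)
    have ha : a = -1 := by push_cast at hT; linarith
    rw [← hw, this, ha]; norm_num
  · exact (not_sq_mod_four _ _ hs (by omega)).elim
  · have : w ^ 4 = (w ^ 2) ^ 2 := by ring
    rw [this, hquad]; norm_num
  · exact (not_sq_mod_four _ _ hs (by omega)).elim
  · have : b = 0 := hb0 (by norm_num)
    have ha : a = 1 := by push_cast at hT; linarith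
    rw [← hw, this, ha]; norm_num

lemma gamma_core (θ : ℂ) (u : ℤ) (hu : 1 ≤ u) (n : ℕ) (D : ℤ)
    (hDdef : D = 1 - 2 * (1 + 2 * u) ^ (2 * n + 1)) (hD : D < 0) (hD4 : D % 4 = 3)
    (hθ : θ ^ 2 = D) (a b : ℚ) (h : IsIntegral ℤ ((a : ℂ) + b * θ))
    (hp : ((a : ℂ) + b * θ) ^ (2 * n + 1) = 2 ^ n * (1 + θ)) : n = 0 := by
  obtain ⟨⟨T, hT⟩, N, hN⟩ := int_data θ D hD hθ a b h
  have hN2 : N = 2 * (1 + 2 * u) := by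
    have h1 := congrArg (starRingEnd ℂ) hp
    simp only [map_mul, map_add, map_pow, theta_conj θ D hD hθ, map_ratCast, map_one,
      map_ofNat] at h1
    have h2 : ((N : ℚ) : ℂ) ^ (2 * n + 1) = ((2 * (1 + 2 * u) : ℤ) : ℂ) ^ (2 * n + 1) := by
      have e1 : ((N : ℚ) : ℂ) = ((a : ℂ) + b * θ) * (a + b * -θ) := by
        rw [hN]; push_cast; rw [← hθ]; ring
      rw [e1, mul_pow, hp, h1]
      have e2 : (2 : ℂ) ^ n * (1 + θ) * (2 ^ n * (1 + -θ)) = 2 ^ (2 * n) * (1 - θ ^ 2) := by ring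
      rw [e2, hθ, hDdef]
      push_cast
      rw [mul_pow]; ring
    have h3 : N ^ (2 * n + 1) = (2 * (1 + 2 * u)) ^ (2 * n + 1) := by exact_mod_cast h2
    exact (Odd.strictMono_pow (R := ℤ) ⟨n, rfl⟩).injective h3
  rw [hN2] at hN
  push_cast at hN
  have hTe : T % 2 = 0 := by
    by_contra hodd
    obtain ⟨s, hs⟩ := sq_of_rat D (T ^ 2 - 8 * (1 + 2 * u)) (2 * b) (by
      push_cast; rw [hT]; linarith)
    obtain ⟨t, rfl⟩ : ∃ t, T = 2 * t + 1 := ⟨T / 2, by omega⟩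
    obtain ⟨d, rfl⟩ : ∃ d, D = 4 * d + 3 := ⟨D / 4, by omega⟩
    refine not_sq_mod_four _ s hs (Or.inr ?_)
    ring_nf
    omega
  obtain ⟨t, rfl⟩ : ∃ t, T = 2 * t := ⟨T / 2, by omega⟩
  have hat : a = t := by push_cast at hT; linarith
  subst hat
  have hto : Odd t := by
    rw [← Int.not_even_iff_odd]
    rintro ⟨r, rfl⟩
    obtain ⟨s, hs⟩ := sq_of_rat D ((r + r) ^ 2 - 2 * (1 + 2 * u)) b (by
      push_cast at hN ⊢; linarith)
    obtain ⟨d, rfl⟩ : ∃ d, D = 4 * d + 3 := ⟨D / 4, by omega⟩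
    refine not_sq_mod_four _ s hs (Or.inl ?_)
    ring_nf
    omega
  have hδ : ((b : ℂ) * θ) * (b * θ) = ((t ^ 2 - 2 * (1 + 2 * u) : ℤ) : ℂ) := by
    have : b ^ 2 * D = ((t ^ 2 - 2 * (1 + 2 * u) : ℤ) : ℚ) := by push_cast; linarith
    have h2 : (b : ℂ) ^ 2 * D = ((t ^ 2 - 2 * (1 + 2 * u) : ℤ) : ℂ) := by exact_mod_cast this
    rw [← h2, ← hθ]; ring
  refine arith_two u hu t _ n hto rfl ?_
  set e := t ^ 2 - 2 * (1 + 2 * u)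
  let φ : ℤ√e →+* ℂ := Zsqrtd.lift ⟨(b : ℂ) * θ, hδ⟩
  have hφ (x : ℤ√e) : φ x = x.re + x.im * (b * θ) := rfl
  have h1 : φ (⟨t, 1⟩ ^ (2 * n + 1)) = 2 ^ n * (1 + θ) := by
    rw [map_pow, hφ, ← hp]; push_cast; ring
  rw [hφ] at h1
  have h2 := congrArg Complex.re h1
  have hre := theta_re θ D hD hθ
  have e1 : ((2 : ℂ) ^ n) = (((2 ^ n : ℤ) : ℝ) : ℂ) := by push_cast; rfl
  have e2 : ∀ q : ℚ, ((q : ℂ)) = ((q : ℝ) : ℂ) := fun q => by push_cast; rfl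
  have e3 : ∀ q : ℤ, ((q : ℂ)) = ((q : ℝ) : ℂ) := fun q => by push_cast; rfl
  rw [e1, e2, e3, e3] at h2
  simp only [Complex.add_re, Complex.re_ofReal_mul, Complex.ofReal_re, hre, Complex.one_re] at h2
  have h3 : (((⟨t, 1⟩ : ℤ√e) ^ (2 * n + 1)).re : ℝ) = ((2 ^ n : ℤ) : ℝ) := by linarith
  exact_mod_cast h3

lemma exists_pow_eq {R : Type*} [CommRing R] [IsDedekindDomain R] [Fintype (ClassGroup R)]
    (p : ℕ) (hp : p.Coprime (Fintype.card (ClassGroup R))) (α α' c : R)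
    (hcop : IsCoprime α α') (h : α * α' = c ^ p) :
    ∃ (β : R) (w : Rˣ), α = β ^ p * w := by
  have h1 : Ideal.span {α} * Ideal.span {α'} = Ideal.span {c} ^ p := by
    rw [Ideal.span_singleton_mul_span_singleton, h, Ideal.span_singleton_pow]
  obtain ⟨I, hI⟩ := exists_eq_pow_of_mul_eq_pow_of_coprime
    ((Ideal.isCoprime_span_singleton_iff α α').2 hcop) h1
  have h2 : (I ^ p).IsPrincipal := ⟨α, hI.symm⟩
  obtain ⟨β, hβ⟩ := Ideal.IsPrincipal.of_isPrincipal_pow_of_coprime hp h2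
  have hβ' : I = Ideal.span {β} := hβ
  rw [hβ', Ideal.span_singleton_pow, Ideal.span_singleton_eq_span_singleton] at hI
  obtain ⟨w, hw⟩ := hI.symm
  exact ⟨β, w, hw.symm⟩

lemma main_odd (u : ℤ) (hu : 1 ≤ u) (n : ℕ) (hp : (2 * n + 1).Prime) :
    (2 * n + 1) ∣ NumberField.classNumber (Qsqrt (1 - 2 * (1 + 2 * u) ^ (2 * n + 1))) := by
  set p := 2 * n + 1 with hpdef
  set m := 1 + 2 * u with hm
  set D := 1 - 2 * m ^ p with hDdef
  by_contra hnd
  have hcop : p.Coprime (Fintype.card (ClassGroup (𝓞 (Qsqrt D)))) :=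
    (Nat.Prime.coprime_iff_not_dvd hp).2 hnd
  have hmodd : Odd m := ⟨u, by rw [hm]; ring⟩
  have hmpos : 1 ≤ m ^ p := one_le_pow₀ (by omega)
  obtain ⟨v, hv⟩ : Odd (m ^ p) := hmodd.pow
  have hD : D < 0 := by omega
  have hD4 : D % 4 = 3 := by omega
  set θ := sqrtC D with hθdef
  have hθ : θ ^ 2 = D := sqrtC_sq D
  have hθmem : θ ∈ Qsqrt D := IntermediateField.subset_adjoin ℚ {sqrtC D} rfl
  have hθint : IsIntegral ℤ θ := by
    refine IsIntegral.of_pow (n := 2) (by norm_num) ?_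
    rw [hθ]
    exact isIntegral_algebraMap (R := ℤ) (A := ℂ) (x := D)
  have toC (x : 𝓞 (Qsqrt D)) : IsIntegral ℤ (((x : Qsqrt D) : ℂ)) := by
    have := x.isIntegral_coe
    exact this.map ((Qsqrt D).val.restrictScalars ℤ)
  have form (x : ℂ) (hx : x ∈ Qsqrt D) : ∃ a b : ℚ, x = a + b * θ :=
    mem_form θ D hD hθ x hx
  have hθK : IsIntegral ℤ (⟨θ, hθmem⟩ : Qsqrt D) := by
    refine (isIntegral_algHom_iff ((Qsqrt D).val.restrictScalars ℤ)
      (Qsqrt D).val.injective).1 ?_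
    exact hθint
  let t : 𝓞 (Qsqrt D) := ⟨⟨θ, hθmem⟩, hθK⟩
  have ht : ((t : Qsqrt D) : ℂ) = θ := rfl
  let ψ : 𝓞 (Qsqrt D) →+* ℂ := (algebraMap (Qsqrt D) ℂ).comp (algebraMap (𝓞 (Qsqrt D)) (Qsqrt D))
  have hψ (x : 𝓞 (Qsqrt D)) : ψ x = ((x : Qsqrt D) : ℂ) := rfl
  have hψt : ψ t = θ := rfl
  have hψinj : Function.Injective ψ :=
    (algebraMap (Qsqrt D) ℂ).injective.comp RingOfIntegers.coe_injective
  have hψmem (x : 𝓞 (Qsqrt D)) : ψ x ∈ Qsqrt D := (x : Qsqrt D).2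
  have htsq : t ^ 2 = (D : 𝓞 (Qsqrt D)) := by
    apply hψinj
    rw [map_pow, hψt, hθ, map_intCast]
  have hDR : (D : 𝓞 (Qsqrt D)) = 1 - 2 * (m : 𝓞 (Qsqrt D)) ^ p := by
    rw [hDdef]; push_cast; ring
  have hprod : (1 - (m : 𝓞 (Qsqrt D)) ^ p + t) * (1 - (m : 𝓞 (Qsqrt D)) ^ p - t)
      = ((m : 𝓞 (Qsqrt D)) ^ 2) ^ p := by
    have : (1 - (m : 𝓞 (Qsqrt D)) ^ p + t) * (1 - (m : 𝓞 (Qsqrt D)) ^ p - t)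
      = (1 - (m : 𝓞 (Qsqrt D)) ^ p) ^ 2 - t ^ 2 := by ring
    rw [this, htsq, hDR]; ring
  have hco : IsCoprime (1 - (m : 𝓞 (Qsqrt D)) ^ p + t) (1 - (m : 𝓞 (Qsqrt D)) ^ p - t) := by
    have hz : IsCoprime (2 * (1 - m ^ p)) ((m ^ 2) ^ p) := by
      have h1 : IsCoprime (2 * (1 - m ^ p)) (m ^ p) := by
        refine IsCoprime.mul_left ?_ ⟨1, 1, by ring⟩
        rw [hv]
        exact ⟨-v, 1, by ring⟩
      have h2 : (m ^ 2) ^ p = (m ^ p) ^ 2 := by ring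
      rw [h2]
      exact h1.pow_right
    obtain ⟨x, y, hxy⟩ := hz
    have hxy' := congrArg (Int.cast : ℤ → 𝓞 (Qsqrt D)) hxy
    push_cast at hxy'
    rw [← hprod] at hxy'
    exact ⟨x + y * (1 - (m : 𝓞 (Qsqrt D)) ^ p - t), x, by linear_combination hxy'⟩
  obtain ⟨β, w, hβ⟩ := exists_pow_eq p hcop _ _ _ hco hprod
  -- the unit `w` satisfies `w ^ 4 = 1`
  have hw4 : (ψ w) ^ 4 = 1 := by
    obtain ⟨a, b, hab⟩ := form _ (hψmem w)
    obtain ⟨c, d, hcd⟩ := form _ (hψmem (w⁻¹ : (𝓞 (Qsqrt D))ˣ))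
    have i1 := toC w
    have i2 := toC (w⁻¹ : (𝓞 (Qsqrt D))ˣ)
    rw [← hψ] at i1 i2
    have hmul : ψ w * ψ (w⁻¹ : (𝓞 (Qsqrt D))ˣ) = 1 := by
      rw [← map_mul, Units.mul_inv, map_one]
    rw [hab] at i1 hmul ⊢
    rw [hcd] at i2 hmul
    exact unit_pow_four_s3 θ D hD hθ hD4 a b c d i1 i2 hmul
  have hwp : (ψ w ^ p) ^ p = ψ w := by
    have : p * p = 4 * (n * n + n) + 1 := by rw [hpdef]; ring
    rw [← pow_mul, this, pow_succ, pow_mul, hw4, one_pow, one_mul]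
  set B : ℂ := ψ (β * w ^ p) with hB
  have hBp : B ^ p = 1 - (m : ℂ) ^ p + θ := by
    have h1 := congrArg ψ hβ
    simp only [map_mul, map_sub, map_add, map_pow, map_one, map_intCast, hψt] at h1
    rw [hB, map_mul, map_pow, mul_pow, hwp, h1]
  have hDC : (D : ℂ) = 1 - 2 * (m : ℂ) ^ p := by
    rw [hDdef]; push_cast; ring
  have hsq : (1 + θ) ^ 2 = 2 * B ^ p := by
    have : (1 + θ) ^ 2 = 1 + 2 * θ + θ ^ 2 := by ring
    rw [this, hθ, hBp, hDC]; ring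
  have hB0 : B ≠ 0 := by
    intro h0
    rw [h0, zero_pow hp.ne_zero, mul_zero] at hsq
    have h1 : 1 + θ = 0 := by simpa using hsq
    have h2 := congrArg Complex.re h1
    rw [Complex.add_re, theta_re θ D hD hθ] at h2
    norm_num at h2
  have hBmem : B ∈ Qsqrt D := hψmem _
  have hBint : IsIntegral ℤ B := toC (β * w ^ p)
  set C : ℂ := (1 + θ) / B ^ n with hC
  have hC2 : C ^ 2 = 2 * B := by
    rw [hC, div_pow, hsq, hpdef, div_eq_iff (pow_ne_zero _ (pow_ne_zero _ hB0))]
    ring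
  have hCint : IsIntegral ℤ C := by
    refine IsIntegral.of_pow (n := 2) (by norm_num) ?_
    rw [hC2]
    have h2 : IsIntegral ℤ (2 : ℂ) := by
      simpa using isIntegral_algebraMap (R := ℤ) (A := ℂ) (x := 2)
    exact h2.mul hBint
  have hCmem : C ∈ Qsqrt D :=
    div_mem (add_mem (one_mem _) hθmem) (pow_mem hBmem n)
  have hCp : C ^ (2 * n + 1) = 2 ^ n * (1 + θ) := by
    rw [pow_succ, pow_mul, hC2, mul_pow, hC]
    have := pow_ne_zero n hB0
    field_simp
  obtain ⟨a, b, hab⟩ := form C hCmem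
  rw [hab] at hCint hCp
  have := gamma_core θ u hu n D hDdef hD hD4 hθ a b hCint hCp
  rw [hpdef, this] at hp
  exact Nat.not_prime_one hp

/-- For an odd integer `m ≥ 3`, for all but finitely many primes `p` the class number of
`ℚ(√(1 - 2 m ^ p))` is divisible by `p`. -/
theorem finitely_many_primes_not_dvd_classNumber
    (m : ℤ) (hm : 3 ≤ m) (hmodd : Odd m) :
    {p : ℕ | p.Prime ∧
      ¬ p ∣ NumberField.classNumber (Qsqrt (1 - 2 * m ^ p))}.Finite := by
  refine (Set.finite_singleton 2).subset ?_
  rintro p ⟨hp, hnd⟩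
  by_contra hp2
  have hodd : Odd p := hp.odd_of_ne_two hp2
  obtain ⟨n, rfl⟩ := hodd
  obtain ⟨u, rfl⟩ := hmodd
  rw [add_comm (2 * u) 1] at hnd
  exact hnd (main_odd u (by omega) n hp)
end
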